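/- arXiv:1512.04700 — 5 statements merged into one kernel-verified Lean document; each statement's English description precedes it below -/
import Mathlib

section
/- Let A be an abelian category whose derived category D(A) has Hom sets, let M be an object of A and n a natural number. Then Ext^k_A(M, N) = 0 for all integers k > n and all objects N of A if and only if the functor Hom_{D(A)}(M[0], ?) vanishes on the full subcategory D^{<-n}(A) of complexes X with H^j(X) = 0 for all j ≥ -n. -/
open CategoryTheory CategoryTheory.Limits

universe w v u

/-!
A morphism in `D(A)` from an object `U` of `D^{≥ m}` to an object `X` of `D^{≤ m}` factors through
an object concentrated in degree `m`: represent it by a roof `U ← P → K` with `K` vanishing in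
degrees `> m`. Then `P → K` factors through the stupid truncation of `P` in degrees `≤ m`, and this
truncation has cohomology only in degree `m` because `P` has none in degrees `< m`. Taking
`m = -n - 1`, the vanishing of `Ext^{n+1}(M, -)` alone kills `Hom(M[0], X)` for all `X` in
`D^{< -n}`.
-/

section StupidTruncation

variable {ι ι' C : Type*} {c : ComplexShape ι} {c' : ComplexShape ι'} (e : c.Embedding c')
  [e.IsTruncLE] [Category* C] [HasZeroMorphisms C]

lemma hasLift_of_isTruncLE {K : HomologicalComplex C c'} {L : HomologicalComplex C c}
    (φ : K.restriction e ⟶ L) : e.HasLift φ := fun _ hj _ hi' ↦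
  let ⟨k, hk⟩ := e.mem_prev hi'
  (hj.notMem hi' k hk).elim

variable [HasZeroObject C]

/-- The canonical projection from a complex to its stupid truncation along an embedding of complex
shapes whose image is closed under predecessors. -/
noncomputable def πStupidTrunc (K : HomologicalComplex C c') : K ⟶ K.stupidTrunc e :=
  e.liftExtend (𝟙 (K.restriction e)) (hasLift_of_isTruncLE e _)

lemma isIso_πStupidTrunc_f (K : HomologicalComplex C c') {i : ι} {i' : ι'} (hi : e.f i = i') :
    IsIso ((πStupidTrunc e K).f i') :=
  (e.isIso_liftExtend_f_iff _ (hasLift_of_isTruncLE e _) hi).2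
    (inferInstanceAs (IsIso (𝟙 ((K.restriction e).X i))))

lemma homRestrict_πStupidTrunc (K : HomologicalComplex C c') :
    e.homRestrict (πStupidTrunc e K) = 𝟙 (K.restriction e) :=
  e.homRestrict_liftExtend _ _

lemma πStupidTrunc_naturality {K L : HomologicalComplex C c'} (g : K ⟶ L) :
    g ≫ πStupidTrunc e L = πStupidTrunc e K ≫ HomologicalComplex.stupidTruncMap g e := by
  apply (e.homEquiv K (L.restriction e)).injective
  ext1
  calc
    e.homRestrict (g ≫ πStupidTrunc e L)
      = HomologicalComplex.restrictionMap g e ≫ e.homRestrict (πStupidTrunc e L) :=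
        e.homRestrict_precomp g _
    _ = e.homRestrict (πStupidTrunc e K) ≫ HomologicalComplex.restrictionMap g e := by
        rw [homRestrict_πStupidTrunc, homRestrict_πStupidTrunc, Category.comp_id, Category.id_comp]
    _ = e.homRestrict (πStupidTrunc e K ≫ HomologicalComplex.stupidTruncMap g e) :=
        (e.homRestrict_comp_extendMap _ _).symm

lemma isIso_πStupidTrunc (L : HomologicalComplex C c') [L.IsStrictlySupported e] :
    IsIso (πStupidTrunc e L) := by
  have isIso_f (i' : ι') : IsIso ((πStupidTrunc e L).f i') := by
    by_cases hi' : ∃ i, e.f i = i'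
    · obtain ⟨i, hi⟩ := hi'
      exact isIso_πStupidTrunc_f e L hi
    · push Not at hi'
      exact (L.isZero_X_of_isStrictlySupported e i' hi').isIso (L.isZero_stupidTrunc_X e i' hi') _
  exact HomologicalComplex.Hom.isIso_of_components _

lemma exists_fac_πStupidTrunc {K L : HomologicalComplex C c'} [L.IsStrictlySupported e]
    (g : K ⟶ L) : ∃ φ : K.stupidTrunc e ⟶ L, g = πStupidTrunc e K ≫ φ := by
  have := isIso_πStupidTrunc e L
  exact ⟨HomologicalComplex.stupidTruncMap g e ≫ inv (πStupidTrunc e L), by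
    rw [← Category.assoc, ← πStupidTrunc_naturality, Category.assoc, IsIso.hom_inv_id,
      Category.comp_id]⟩

end StupidTruncation

lemma quasiIsoAt_of_epi_of_isIso_of_mono {ι C : Type*} {c : ComplexShape ι} [Category* C]
    [HasZeroMorphisms C] {K L : HomologicalComplex C c} (φ : K ⟶ L) (i j k : ι)
    (hi : c.prev j = i) (hk : c.next j = k) [K.HasHomology j] [L.HasHomology j]
    [hφi : Epi (φ.f i)] [hφj : IsIso (φ.f j)] [hφk : Mono (φ.f k)] :
    QuasiIsoAt φ j := by
  subst hi hk
  let ψ := (HomologicalComplex.shortComplexFunctor C c j).map φ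
  have : Epi ψ.τ₁ := hφi
  have : IsIso ψ.τ₂ := hφj
  have : Mono ψ.τ₃ := hφk
  rw [quasiIsoAt_iff]
  exact ShortComplex.quasiIso_of_epi_of_isIso_of_mono ψ

section Abelian

variable {A : Type u} [Category.{v} A] [Abelian A]

lemma isGE_stupidTrunc_embeddingUpIntLE (P : CochainComplex A ℤ) (m : ℤ) [P.IsGE m] :
    CochainComplex.IsGE (P.stupidTrunc (ComplexShape.embeddingUpIntLE m)) m := by
  let e := ComplexShape.embeddingUpIntLE m
  have isIso_f (i : ℤ) (hi : i ≤ m) : IsIso ((πStupidTrunc e P).f i) :=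
    isIso_πStupidTrunc_f e P (i := (m - i).toNat) (by
      change m - ((m - i).toNat : ℤ) = i
      lia)
  rw [CochainComplex.isGE_iff]
  intro i hi
  have := isIso_f (i - 1) (by lia)
  have := isIso_f i (by lia)
  have := isIso_f (i + 1) (by lia)
  rw [← quasiIsoAt_iff_exactAt (πStupidTrunc e P) i (P.exactAt_of_isGE m i hi)]
  exact quasiIsoAt_of_epi_of_isIso_of_mono _ (i - 1) i (i + 1) (by simp) (by simp)

variable [HasDerivedCategory.{w} A]

open DerivedCategory

lemma exists_fac_singleFunctor_obj {U X : DerivedCategory A} (m : ℤ) [U.IsGE m] [X.IsLE m]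
    (f : U ⟶ X) :
    ∃ (N : A) (a : U ⟶ (singleFunctor A m).obj N) (b : (singleFunctor A m).obj N ⟶ X),
      f = a ≫ b := by
  obtain ⟨L, _, ⟨eU⟩⟩ := exists_iso_Q_obj_of_isGE U m
  obtain ⟨K, _, ⟨eX⟩⟩ := exists_iso_Q_obj_of_isLE X m
  obtain ⟨P, s, _, g, hg⟩ := right_fac (eU.inv ≫ f ≫ eX.hom)
  have : P.IsGE m := by
    rw [← isGE_Q_obj_iff]
    exact TStructure.t.isGE_of_iso (asIso (Q.map s)).symm m
  let e := ComplexShape.embeddingUpIntLE m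
  let Y : CochainComplex A ℤ := P.stupidTrunc e
  have : Y.IsGE m := isGE_stupidTrunc_embeddingUpIntLE P m
  have : Y.IsStrictlyLE m := inferInstanceAs ((P.stupidTrunc e).IsStrictlySupported e)
  obtain ⟨φ, rfl⟩ := exists_fac_πStupidTrunc e g
  obtain ⟨N, ⟨eN⟩⟩ := exists_iso_singleFunctor_obj_of_isGE_of_isLE (Q.obj Y) m
  refine ⟨N, eU.hom ≫ inv (Q.map s) ≫ Q.map (πStupidTrunc e P) ≫ eN.hom,
    eN.inv ≫ Q.map φ ≫ eX.inv, ?_⟩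
  rw [← cancel_epi eU.inv, ← cancel_mono eX.hom, Category.assoc, hg]
  simp

lemma isLE_singleFunctor_obj_shift (N : A) (k : ℤ) :
    (((singleFunctor A 0).obj N)⟦k⟧).IsLE (-k) :=
  TStructure.t.isLE_shift _ 0 k (-k) (by lia)

theorem stmt3_general (U : DerivedCategory A) (n : ℤ) [U.IsGE (-n - 1)] :
    (∀ k : ℤ, n < k → ∀ (N : A) (f : U ⟶ ((singleFunctor A 0).obj N)⟦k⟧), f = 0) ↔
      ∀ X : DerivedCategory A, (∀ j : ℤ, -n ≤ j → IsZero ((homologyFunctor A j).obj X)) →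
        ∀ f : U ⟶ X, f = 0 := by
  constructor
  · intro ext_eq_zero X hX f
    have : X.IsLE (-n - 1) := (isLE_iff X _).2 fun j hj ↦ hX j (by lia)
    obtain ⟨N, a, b, rfl⟩ := exists_fac_singleFunctor_obj (-n - 1) f
    let shiftIso := ((singleFunctors A).shiftIso (n + 1) (-n - 1) 0 (by lia)).app N
    have ha : a = 0 := by
      rw [← cancel_mono shiftIso.inv, zero_comp]
      exact ext_eq_zero (n + 1) (by lia) N _
    rw [ha, zero_comp]
  · intro hom_eq_zero k hk N f
    have := isLE_singleFunctor_obj_shift N k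
    exact hom_eq_zero _ (fun j hj ↦ isZero_of_isLE _ (-k) j (by lia)) f

end Abelian

/-- Let `A` be an abelian category whose derived category has Hom sets, `M` an object of `A`
and `n` a natural number.  Then `Ext^k_A(M, N) = 0` for all integers `k > n` and all `N`
(expressed via morphisms `M[0] ⟶ N[0]⟦k⟧` in the derived category) if and only if
`Hom_{D(A)}(M[0], ?)` vanishes on the full subcategory `D^{< -n}(A)` of complexes whose
cohomology vanishes in all degrees `≥ -n`. -/
theorem stmt3 {A : Type u} [Category.{v} A] [Abelian A] [HasDerivedCategory.{w} A]
    (M : A) (n : ℕ) :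
    (∀ (k : ℤ), (n : ℤ) < k → ∀ (N : A),
        ∀ f : (DerivedCategory.singleFunctor A 0).obj M ⟶
          ((DerivedCategory.singleFunctor A 0).obj N)⟦k⟧, f = 0) ↔
    (∀ (X : DerivedCategory A),
        (∀ (j : ℤ), -(n : ℤ) ≤ j → IsZero ((DerivedCategory.homologyFunctor A j).obj X)) →
        ∀ f : (DerivedCategory.singleFunctor A 0).obj M ⟶ X, f = 0) := by
  have := DerivedCategory.TStructure.t.isGE_of_ge
    ((DerivedCategory.singleFunctor A 0).obj M) (-(n : ℤ) - 1) 0 (by lia)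
  exact stmt3_general _ (n : ℤ)
end

section
/- Let A be an abelian category whose derived category D(A) has Hom sets and arbitrary set-indexed coproducts. Let (X_i)_{i∈I} be a family of objects of D^{≤0}(A) with coproduct ∐ X_i in D(A) and injections ι_j : X_j → ∐ X_i. Then H^0(∐ X_i), together with the morphisms H^0(ι_j) : H^0(X_j) → H^0(∐ X_i), is a coproduct of the objects H^0(X_i) in A. In particular, A has all set-indexed coproducts (is AB3). -/
open CategoryTheory CategoryTheory.Limits

universe w v u

/-!
The functor `H^n : D^{≤n}(A) ⥤ A` is left adjoint to the inclusion of stalk complexes: a morphism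
from `X` in `D^{≤n}(A)` to `M[-n]` factors uniquely through `X ⟶ τ^{≥n} X ≅ H^n(X)[-n]`, and `A`
embeds fully faithfully. The aisle `D^{≤n}(A)` is a left orthogonal, hence closed under the colimits
of `D(A)`. So `H^n` preserves colimits of objects of the aisle, and `A`, being reflective in the
aisle, inherits its colimits.
-/

section Colimits

variable {C D J : Type*} [Category* C] [Category* D] [Category* J]

lemma preservesColimit_of_preservesColimitsOfShape_ι_comp (P : ObjectProperty C)
    [P.IsClosedUnderColimitsOfShape J] (F : C ⥤ D) [PreservesColimitsOfShape J (P.ι ⋙ F)]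
    (K : J ⥤ C) (hK : ∀ j, P (K.obj j)) : PreservesColimit K F where
  preserves {c} hc := by
    let c' : Cocone (P.lift K hK) :=
      { pt := ⟨c.pt, P.prop_of_isColimit hc hK⟩
        ι := { app := fun j => ObjectProperty.homMk (c.ι.app j)
               naturality := fun i j f => P.ι.map_injective (c.ι.naturality f) } }
    have hc' : IsColimit c' := isColimitOfReflects P.ι hc
    exact ⟨isColimitOfPreserves (P.ι ⋙ F) hc'⟩

end Colimits

section TStructure

open Triangulated Pretriangulated

variable {C : Type*} [Category* C] [Preadditive C] [HasZeroObject C] [HasShift C ℤ]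
  [∀ n : ℤ, (shiftFunctor C n).Additive] [Pretriangulated C] (t : TStructure C)

instance isClosedUnderColimitsOfShape_tStructure_le (n : ℤ) (J : Type*) [Category* J] :
    (t.le n).IsClosedUnderColimitsOfShape J where
  colimitsOfShape_le X := by
    rintro ⟨pres⟩
    rw [t.le_iff_isLE, t.isLE_iff_orthogonal n (n + 1) rfl]
    intro Y f _
    refine pres.isColimit.hom_ext fun j => ?_
    have : t.IsLE (pres.diag.obj j) n := ⟨pres.prop_diag_obj j⟩
    exact (t.zero _ n (n + 1)).trans comp_zero.symm

lemma bijective_truncGEπ_comp (n : ℤ) (X Y : C) [t.IsGE Y n] :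
    Function.Bijective fun g : (t.truncGE n).obj X ⟶ Y => (t.truncGEπ n).app X ≫ g :=
  ⟨fun _ _ h => t.from_truncGE_obj_ext h, fun f => ⟨t.descTruncGE f n, t.π_descTruncGE f n⟩⟩

end TStructure

section DerivedCategory

open DerivedCategory DerivedCategory.TStructure

variable {A : Type u} [Category.{v} A] [Abelian A] [HasDerivedCategory.{w} A]

lemma isIso_homologyFunctor_map_truncGEπ_app (X : DerivedCategory A) {n k : ℤ} (hnk : n ≤ k) :
    IsIso ((homologyFunctor A k).map ((t.truncGEπ n).app X)) := by
  have dist := t.triangleLTGE_distinguished n X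
  have isZero_lt (i : ℤ) (hi : n ≤ i) :
      IsZero ((homologyFunctor A i).obj ((t.truncLT n).obj X)) :=
    isZero_of_isLE _ (n - 1) i (by lia)
  have : Mono ((homologyFunctor A k).map ((t.truncGEπ n).app X)) :=
    (HomologySequence.mono_homologyMap_mor₂_iff _ dist k).2 ((isZero_lt k hnk).eq_of_src _ _)
  have : Epi ((homologyFunctor A k).map ((t.truncGEπ n).app X)) :=
    (HomologySequence.epi_homologyMap_mor₂_iff _ dist k (k + 1)).2
      ((isZero_lt (k + 1) (by lia)).eq_of_tgt _ _)
  exact isIso_of_mono_of_epi _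

/-- The comparison map `Hom(X, M[-n]) → Hom(H^n(X), M)` of the adjunction between `H^n` and stalk
complexes in degree `n`; it is defined for every `X` and is a bijection when `X` is in
`D^{≤n}(A)`. -/
noncomputable def homologyDesc {n : ℤ} {X : DerivedCategory A} {M : A}
    (f : X ⟶ (singleFunctor A n).obj M) : (homologyFunctor A n).obj X ⟶ M :=
  (homologyFunctor A n).map f ≫ (singleFunctorCompHomologyFunctorIso A n).hom.app M

lemma homologyDesc_comp {n : ℤ} {X Y : DerivedCategory A} {M : A} (p : X ⟶ Y)
    (f : Y ⟶ (singleFunctor A n).obj M) :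
    homologyDesc (p ≫ f) = (homologyFunctor A n).map p ≫ homologyDesc f := by
  simp only [homologyDesc, Functor.map_comp, Category.assoc]

lemma homologyDesc_singleFunctor_map {n : ℤ} {M N : A} (g : M ⟶ N) :
    homologyDesc ((singleFunctor A n).map g) =
      (singleFunctorCompHomologyFunctorIso A n).hom.app M ≫ g :=
  (singleFunctorCompHomologyFunctorIso A n).hom.naturality g

lemma homologyDesc_comp_singleFunctor_map {n : ℤ} {X : DerivedCategory A} {M N : A}
    (f : X ⟶ (singleFunctor A n).obj M) (g : M ⟶ N) :
    homologyDesc (f ≫ (singleFunctor A n).map g) = homologyDesc f ≫ g := by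
  rw [homologyDesc_comp, homologyDesc_singleFunctor_map, homologyDesc, Category.assoc]

lemma bijective_homologyDesc_of_comp {n : ℤ} {X Y : DerivedCategory A} {M : A} (p : X ⟶ Y)
    [IsIso ((homologyFunctor A n).map p)]
    (hp : Function.Bijective fun f : Y ⟶ (singleFunctor A n).obj M => p ≫ f)
    (hY : Function.Bijective (homologyDesc : (Y ⟶ (singleFunctor A n).obj M) → _)) :
    Function.Bijective (homologyDesc : (X ⟶ (singleFunctor A n).obj M) → _) := by
  rw [← Function.Bijective.of_comp_iff _ hp]
  have comp_eq : (homologyDesc ∘ fun f : Y ⟶ (singleFunctor A n).obj M => p ≫ f) =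
      (fun d => (homologyFunctor A n).map p ≫ d) ∘ homologyDesc :=
    funext fun f => homologyDesc_comp p f
  rw [comp_eq]
  exact ((asIso ((homologyFunctor A n).map p)).homFromEquiv).symm.bijective.comp hY

lemma bijective_homologyDesc_singleFunctor (n : ℤ) (M N : A) :
    Function.Bijective (homologyDesc :
      ((singleFunctor A n).obj M ⟶ (singleFunctor A n).obj N) → _) := by
  have single_bijective := (Functor.FullyFaithful.ofFullyFaithful (singleFunctor A n)).map_bijective
  rw [← Function.Bijective.of_comp_iff _ (single_bijective M N)]
  have comp_eq : homologyDesc ∘ (singleFunctor A n).map =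
      fun g : M ⟶ N => (singleFunctorCompHomologyFunctorIso A n).hom.app M ≫ g :=
    funext homologyDesc_singleFunctor_map
  rw [comp_eq]
  exact ((singleFunctorCompHomologyFunctorIso A n).app M).homFromEquiv.symm.bijective

lemma bijective_homologyDesc (n : ℤ) (X : DerivedCategory A) [X.IsLE n] (M : A) :
    Function.Bijective (homologyDesc : (X ⟶ (singleFunctor A n).obj M) → _) := by
  obtain ⟨N, ⟨e⟩⟩ := exists_iso_singleFunctor_obj_of_isGE_of_isLE ((t.truncGE n).obj X) n
  have := isIso_homologyFunctor_map_truncGEπ_app X (le_refl n)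
  refine bijective_homologyDesc_of_comp ((t.truncGEπ n).app X) (bijective_truncGEπ_comp t n X _) ?_
  exact bijective_homologyDesc_of_comp e.hom e.homFromEquiv.symm.bijective
    (bijective_homologyDesc_singleFunctor n N M)

variable (A)

/-- The aisle `D^{≤n}(A)` of the canonical t-structure. -/
abbrev Aisle (n : ℤ) : Type (max u v) :=
  ((t : Triangulated.TStructure (DerivedCategory A)).le n).FullSubcategory

/-- The cohomology functor `H^n` restricted to `D^{≤n}(A)`. -/
noncomputable abbrev aisleHomologyFunctor (n : ℤ) : Aisle A n ⥤ A :=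
  (t.le n).ι ⋙ homologyFunctor A n

/-- The functor `A ⥤ D^{≤n}(A)` sending an object to its stalk complex in degree `n`. -/
noncomputable abbrev aisleSingleFunctor (n : ℤ) : A ⥤ Aisle A n :=
  (t.le n).lift (singleFunctor A n) fun _ => t.le_of_isLE _ n

variable {A} in
/-- The bijection `Hom(X, M[-n]) ≃ Hom(H^n(X), M)` for `X` in `D^{≤n}(A)`. -/
noncomputable def aisleHomologyHomEquiv {n : ℤ} (X : Aisle A n) (M : A) :
    (X ⟶ (aisleSingleFunctor A n).obj M) ≃ ((aisleHomologyFunctor A n).obj X ⟶ M) :=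
  have : X.obj.IsLE n := ⟨X.property⟩
  (t.le n).fullyFaithfulι.homEquiv.trans
    (Equiv.ofBijective homologyDesc (bijective_homologyDesc n X.obj M))

/-- The adjunction between the restriction of `H^n` to `D^{≤n}(A)` and the inclusion of stalk
complexes in degree `n`. -/
noncomputable def aisleHomologyAdjunction (n : ℤ) :
    aisleHomologyFunctor A n ⊣ aisleSingleFunctor A n :=
  Adjunction.mkOfHomEquiv
    { homEquiv X M := (aisleHomologyHomEquiv X M).symm
      homEquiv_naturality_left_symm p f := homologyDesc_comp p.hom f.hom
      homEquiv_naturality_right {X M N} d g := by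
        obtain ⟨f, rfl⟩ := (aisleHomologyHomEquiv X M).surjective d
        rw [Equiv.symm_apply_apply, Equiv.symm_apply_eq]
        exact (homologyDesc_comp_singleFunctor_map f.hom g).symm }

noncomputable instance reflectiveAisleSingleFunctor (n : ℤ) :
    Reflective (aisleSingleFunctor A n) where
  L := aisleHomologyFunctor A n
  adj := aisleHomologyAdjunction A n

variable {A} {J : Type*} [Category* J]

lemma preservesColimit_homologyFunctor (n : ℤ) (K : J ⥤ DerivedCategory A)
    (hK : ∀ j, (K.obj j).IsLE n) : PreservesColimit K (homologyFunctor A n) :=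
  have : PreservesColimitsOfShape J (aisleHomologyFunctor A n) :=
    (aisleHomologyAdjunction A n).leftAdjoint_preservesColimits.preservesColimitsOfShape
  preservesColimit_of_preservesColimitsOfShape_ι_comp (t.le n) _ K fun j => (hK j).le

variable (A J) in
lemma hasColimitsOfShape_of_hasColimitsOfShape_derivedCategory
    [HasColimitsOfShape J (DerivedCategory A)] : HasColimitsOfShape J A :=
  hasColimitsOfShape_of_reflective (aisleSingleFunctor A 0)

end DerivedCategory

theorem stmt4_general {A : Type u} [Category.{v} A] [Abelian A] [HasDerivedCategory.{w} A]
    {J : Type*} [Category* J] :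
    (∀ (n : ℤ) (K : J ⥤ DerivedCategory A),
      (∀ (j : J) (i : ℤ), n < i →
        IsZero ((DerivedCategory.homologyFunctor A i).obj (K.obj j))) →
      PreservesColimit K (DerivedCategory.homologyFunctor A n)) ∧
    (HasColimitsOfShape J (DerivedCategory A) → HasColimitsOfShape J A) :=
  ⟨fun n K hK => preservesColimit_homologyFunctor n K fun j =>
      (DerivedCategory.isLE_iff _ n).2 (hK j),
    fun _ => hasColimitsOfShape_of_hasColimitsOfShape_derivedCategory A J⟩

/-- Let `A` be an abelian category whose derived category has Hom sets and all set-indexed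
coproducts.  For every family `(Xᵢ)` of objects of `D^{≤0}(A)`, the object `H^0(∐ Xᵢ)` together
with the morphisms `H^0(ιⱼ)` is a coproduct of the `H^0(Xᵢ)` in `A`; in particular `A` has all
set-indexed coproducts (it is AB3). -/
theorem stmt4 {A : Type u} [Category.{v} A] [Abelian A] [HasDerivedCategory.{w} A]
    [HasCoproducts.{v} (DerivedCategory A)] :
    (∀ (I : Type v) (X : I → DerivedCategory A),
      (∀ (i : I) (j : ℤ), 0 < j → IsZero ((DerivedCategory.homologyFunctor A j).obj (X i))) →
      Nonempty (IsColimit (Cofan.mk ((DerivedCategory.homologyFunctor A 0).obj (∐ X))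
        (fun i => (DerivedCategory.homologyFunctor A 0).map (Sigma.ι X i))))) ∧
    HasCoproducts.{v} A := by
  refine ⟨fun I X hX => ?_, fun I => stmt4_general.2 inferInstance⟩
  have := stmt4_general.1 0 (Discrete.functor X) fun i => hX i.as
  exact ⟨isColimitOfHasCoproductOfPreservesColimit (DerivedCategory.homologyFunctor A 0) X⟩
end

section
/- Let A be an abelian category whose derived category D(A) has Hom sets and coproducts, and let T be an object of A satisfying: (i) the coproduct T^{(I)} of I copies of T is the same in A and in D(A) for all sets I, and (ii) Ext^k_A(T, T^{(I)}) = 0 for all integers k > 0 and all sets I. Then the composite functor F : K^b(Add(T)) → K(A) → D(A) (inclusion followed by the localization functor) is fully faithful; consequently thick_{D(A)}(Sum(T)) consists precisely of the complexes isomorphic in D(A) to bounded complexes of objects of Add(T). -/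
open CategoryTheory CategoryTheory.Limits CategoryTheory.Pretriangulated

universe w v u

variable {A : Type u} [Category.{v} A] [Abelian A] [HasDerivedCategory.{w} A]

/-- A class of objects of a triangulated category is thick: it contains the zero objects, is
closed under isomorphisms, shifts, extensions and direct summands. -/
structure IsThickSet (D : Type*) [Category D] [Limits.HasZeroObject D] [Preadditive D]
    [HasShift D ℤ] [∀ n : ℤ, (CategoryTheory.shiftFunctor D n).Additive] [Pretriangulated D]
    (S : Set D) : Prop where
  zero : ∀ Z : D, Limits.IsZero Z → Z ∈ S
  iso : ∀ ⦃X Y : D⦄, (X ≅ Y) → X ∈ S → Y ∈ S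
  shift : ∀ ⦃X : D⦄, X ∈ S → ∀ n : ℤ, X⟦n⟧ ∈ S
  ext₂ : ∀ (T : Triangle D), T ∈ (distTriang D) → T.obj₁ ∈ S → T.obj₃ ∈ S → T.obj₂ ∈ S
  summand : ∀ ⦃X Y : D⦄, (∃ (s : X ⟶ Y) (r : Y ⟶ X), s ≫ r = 𝟙 X) → Y ∈ S → X ∈ S

variable [HasCoproducts.{v} A] [HasCoproducts.{v} (DerivedCategory A)] (T : A)

/-- `Add(T)`: direct summands of set-indexed coproducts of copies of `T` in `A`. -/
def addT : Set A :=
  {X | ∃ (I : Type v) (s : X ⟶ ∐ (fun _ : I => T)) (r : ∐ (fun _ : I => T) ⟶ X), s ≫ r = 𝟙 X}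

/-- A cochain complex is a bounded complex with entries in `Add(T)`. -/
def isBoundedAddT (X : CochainComplex A ℤ) : Prop :=
  (∀ n : ℤ, X.X n ∈ addT T) ∧ ∃ a b : ℤ, ∀ n : ℤ, (n < a ∨ b < n) → Limits.IsZero (X.X n)

/-- The objects of `D(A)` isomorphic to (the image of) a bounded complex of objects of
`Add(T)`. -/
def boundedAddTSet : Set (DerivedCategory A) :=
  {Z | ∃ X : CochainComplex A ℤ, isBoundedAddT T X ∧ Nonempty (Z ≅ DerivedCategory.Q.obj X)}

/-- `Sum(T)` viewed in `D(A)`: objects isomorphic to `(T^{(I)})[0]` for some set `I`. -/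
def sumTSet : Set (DerivedCategory A) :=
  {Z | ∃ I : Type v,
    Nonempty (Z ≅ (DerivedCategory.singleFunctor A 0).obj (∐ (fun _ : I => T)))}

/-!
Condition (i) turns coproducts of copies of `T` into products after applying `Hom(-, N⟦k⟧)` in
`D(A)`, so (ii) gives `Ext^k(M, N) = 0` for all `M, N ∈ Add(T)` and `k > 0`. Hence `K(A) ⥤ D(A)` is
bijective on morphisms between shifts of stalk complexes of `Add(T)`; bounded complexes are iterated
extensions of stalk complexes, so the five lemma extends this to all of `K^b(Add(T))`. As the image
of a triangulated category under a full triangulated functor, the essential image of `K^b(Add(T))`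
is closed under shifts and extensions.

It is closed under direct summands by an Eilenberg swindle. If `X` is a summand of a bounded complex
`Y`, full faithfulness makes the corresponding idempotent in `D(A)` come from a homotopy idempotent
`e : Y ⟶ Y`. With `W` the termwise coproduct of countably many copies of `Y`, on which `e` acts
termwise, one gets `W ≅ X ⊞ W` in `D(A)`, so `X` completes a triangle on two copies of the bounded
complex `W`. The coproduct is never taken in `D(A)`: all that is used about `W` is the decomposition
`W ≅ Y ⊞ W` compatible with `e`, which an additive functor preserves.
-/

namespace BoundedAddComplex

section TriangulatedFunctor

open scoped ZeroObject

variable {C D : Type*} [Category* C] [Category* D]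

lemma bijective_map_of_iso {F : C ⥤ D} {X X' Y Y' : C} (e : X ≅ X') (e' : Y ≅ Y')
    (h : Function.Bijective (F.map : (X ⟶ Y) → _)) :
    Function.Bijective (F.map : (X' ⟶ Y') → _) := by
  have conj : (F.map : (X' ⟶ Y') → _) =
      (F.mapIso e).homCongr (F.mapIso e') ∘ F.map ∘ (e.homCongr e').symm := by
    ext f
    simp only [Function.comp_apply, Iso.homCongr_apply, Iso.homCongr_symm, Iso.symm_hom,
      Iso.symm_inv, Functor.mapIso_hom, Functor.mapIso_inv, F.map_comp, Category.assoc,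
      Iso.map_inv_hom_id_assoc, Iso.map_inv_hom_id, Category.comp_id]
  rw [conj]
  exact ((F.mapIso e).homCongr (F.mapIso e')).bijective.comp (h.comp (e.homCongr e').symm.bijective)

variable [HasShift C ℤ] (F : C ⥤ D)

/-- `F` induces bijections `Hom(X⟦m⟧, Y⟦n⟧) → Hom(F(X⟦m⟧), F(Y⟦n⟧))` for all `m` and `n`. Allowing
all shifts makes this condition stable under extensions in both `X` and `Y`. -/
def BijectiveOnShiftedHoms (X Y : C) : Prop :=
  ∀ m n : ℤ, Function.Bijective (F.map : (X⟦m⟧ ⟶ Y⟦n⟧) → _)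

variable {F} in
lemma BijectiveOnShiftedHoms.bijective_map {X Y : C} (h : BijectiveOnShiftedHoms F X Y) :
    Function.Bijective (F.map : (X ⟶ Y) → _) :=
  bijective_map_of_iso ((shiftFunctorZero C ℤ).app X) ((shiftFunctorZero C ℤ).app Y) (h 0 0)

instance (Y : C) : ObjectProperty.IsClosedUnderIsomorphisms (BijectiveOnShiftedHoms F · Y) where
  of_iso e h m n := bijective_map_of_iso ((shiftFunctor C m).mapIso e) (Iso.refl _) (h m n)

instance (X : C) : ObjectProperty.IsClosedUnderIsomorphisms (BijectiveOnShiftedHoms F X) where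
  of_iso e h m n := bijective_map_of_iso (Iso.refl _) ((shiftFunctor C n).mapIso e) (h m n)

variable [HasZeroObject C] [HasZeroObject D] [Preadditive C] [Preadditive D]
  [HasShift D ℤ] [∀ n : ℤ, (shiftFunctor C n).Additive] [∀ n : ℤ, (shiftFunctor D n).Additive]
  [Pretriangulated C] [Pretriangulated D]

lemma exact_leftComp_of_distinguished {Δ : Triangle C} (hΔ : Δ ∈ distTriang C) (Y : C) :
    Function.Exact (Preadditive.leftComp Y Δ.mor₂) (Preadditive.leftComp Y Δ.mor₁) := fun f =>
  ⟨fun hf => (Δ.yoneda_exact₂ hΔ f hf).imp fun _ => Eq.symm, by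
    rintro ⟨g, rfl⟩
    exact (comp_distTriang_mor_zero₁₂_assoc _ hΔ g).trans zero_comp⟩

lemma exact_rightComp_of_distinguished {Δ : Triangle C} (hΔ : Δ ∈ distTriang C) (X : C) :
    Function.Exact (Preadditive.rightComp X Δ.mor₁) (Preadditive.rightComp X Δ.mor₂) := fun f =>
  ⟨fun hf => (Δ.coyoneda_exact₂ hΔ f hf).imp fun _ => Eq.symm, by
    rintro ⟨g, rfl⟩
    change (g ≫ Δ.mor₁) ≫ Δ.mor₂ = 0
    rw [Category.assoc, comp_distTriang_mor_zero₁₂ _ hΔ, comp_zero]⟩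

variable [F.CommShift ℤ] [F.IsTriangulated]

instance (Y : C) : ObjectProperty.ContainsZero (BijectiveOnShiftedHoms F · Y) where
  exists_zero := ⟨0, isZero_zero C, fun m _ =>
    have h : IsZero ((0 : C)⟦m⟧) := Functor.map_isZero _ (isZero_zero C)
    ⟨fun _ _ _ => h.eq_of_src _ _, fun _ => ⟨0, (F.map_isZero h).eq_of_src _ _⟩⟩⟩

instance (X : C) : ObjectProperty.ContainsZero (BijectiveOnShiftedHoms F X) where
  exists_zero := ⟨0, isZero_zero C, fun _ n =>
    have h : IsZero ((0 : C)⟦n⟧) := Functor.map_isZero _ (isZero_zero C)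
    ⟨fun _ _ _ => h.eq_of_tgt _ _, fun _ => ⟨0, (F.map_isZero h).eq_of_tgt _ _⟩⟩⟩

lemma bijective_map_from_obj₂ {Δ : Triangle C} (hΔ : Δ ∈ distTriang C) {Y : C}
    (h₁ : Function.Bijective (F.map : (Δ.obj₁ ⟶ Y) → _))
    (h₁' : Function.Bijective (F.map : (Δ.obj₁⟦(1 : ℤ)⟧ ⟶ Y) → _))
    (h₃ : Function.Bijective (F.map : (Δ.obj₃ ⟶ Y) → _))
    (h₃' : Function.Bijective (F.map : (Δ.obj₃⟦(-1 : ℤ)⟧ ⟶ Y) → _)) :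
    Function.Bijective (F.map : (Δ.obj₂ ⟶ Y) → _) := by
  have hrot := rot_of_distTriang _ hΔ
  have hinv := inv_rot_of_distTriang _ hΔ
  have naturality {U V : C} (φ : U ⟶ V) :
      (Preadditive.leftComp (F.obj Y) (F.map φ)).comp F.mapAddHom =
        F.mapAddHom.comp (Preadditive.leftComp Y φ) :=
    AddMonoidHom.ext fun g => (F.map_comp φ g).symm
  exact AddMonoidHom.bijective_of_surjective_of_bijective_of_bijective_of_injective
    _ _ _ _ _ _ _ _ F.mapAddHom F.mapAddHom F.mapAddHom F.mapAddHom F.mapAddHom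
    (naturality _) (naturality _) (naturality _) (naturality _)
    (exact_leftComp_of_distinguished hrot Y) (exact_leftComp_of_distinguished hΔ Y)
    (exact_leftComp_of_distinguished hinv Y)
    (exact_leftComp_of_distinguished (F.map_distinguished _ hrot) _)
    (exact_leftComp_of_distinguished (F.map_distinguished _ hΔ) _)
    (exact_leftComp_of_distinguished (F.map_distinguished _ hinv) _) h₁'.2 h₃ h₁ h₃'.1

lemma bijective_map_to_obj₂ {Δ : Triangle C} (hΔ : Δ ∈ distTriang C) {X : C}
    (h₁ : Function.Bijective (F.map : (X ⟶ Δ.obj₁) → _))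
    (h₁' : Function.Bijective (F.map : (X ⟶ Δ.obj₁⟦(1 : ℤ)⟧) → _))
    (h₃ : Function.Bijective (F.map : (X ⟶ Δ.obj₃) → _))
    (h₃' : Function.Bijective (F.map : (X ⟶ Δ.obj₃⟦(-1 : ℤ)⟧) → _)) :
    Function.Bijective (F.map : (X ⟶ Δ.obj₂) → _) := by
  have hrot := rot_of_distTriang _ hΔ
  have hinv := inv_rot_of_distTriang _ hΔ
  have naturality {U V : C} (φ : U ⟶ V) :
      (Preadditive.rightComp (F.obj X) (F.map φ)).comp F.mapAddHom =
        F.mapAddHom.comp (Preadditive.rightComp X φ) :=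
    AddMonoidHom.ext fun g => (F.map_comp g φ).symm
  exact AddMonoidHom.bijective_of_surjective_of_bijective_of_bijective_of_injective
    _ _ _ _ _ _ _ _ F.mapAddHom F.mapAddHom F.mapAddHom F.mapAddHom F.mapAddHom
    (naturality _) (naturality _) (naturality _) (naturality _)
    (exact_rightComp_of_distinguished hinv X) (exact_rightComp_of_distinguished hΔ X)
    (exact_rightComp_of_distinguished hrot X)
    (exact_rightComp_of_distinguished (F.map_distinguished _ hinv) _)
    (exact_rightComp_of_distinguished (F.map_distinguished _ hΔ) _)
    (exact_rightComp_of_distinguished (F.map_distinguished _ hrot) _) h₃'.2 h₁ h₃ h₁'.1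

instance (Y : C) : ObjectProperty.IsTriangulatedClosed₂ (BijectiveOnShiftedHoms F · Y) :=
  .mk' fun Δ hΔ h₁ h₃ m n =>
    bijective_map_from_obj₂ F (Triangle.shift_distinguished Δ hΔ m) (h₁ m n)
      (bijective_map_of_iso ((shiftFunctorAdd C m 1).app _) (Iso.refl _) (h₁ _ n)) (h₃ m n)
      (bijective_map_of_iso ((shiftFunctorAdd C m (-1)).app _) (Iso.refl _) (h₃ _ n))

instance (X : C) : ObjectProperty.IsTriangulatedClosed₂ (BijectiveOnShiftedHoms F X) :=
  .mk' fun Δ hΔ h₁ h₃ m n =>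
    bijective_map_to_obj₂ F (Triangle.shift_distinguished Δ hΔ n) (h₁ m n)
      (bijective_map_of_iso (Iso.refl _) ((shiftFunctorAdd C n 1).app _) (h₁ m _)) (h₃ m n)
      (bijective_map_of_iso (Iso.refl _) ((shiftFunctorAdd C n (-1)).app _) (h₃ m _))

end TriangulatedFunctor

section Devissage

variable {C : Type*} [Category* C] [Abelian C]

lemma exists_distinguished_cokernel {X Y : CochainComplex C ℤ} (f : X ⟶ Y)
    [∀ n, IsSplitMono (f.f n)] :
    ∃ δ, Triangle.mk ((HomotopyCategory.quotient C (ComplexShape.up ℤ)).map f)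
      ((HomotopyCategory.quotient C (ComplexShape.up ℤ)).map (cokernel.π f)) δ ∈
        distTriang (HomotopyCategory C (ComplexShape.up ℤ)) := by
  let S : ShortComplex (CochainComplex C ℤ) := .mk f (cokernel.π f) (cokernel.condition f)
  have hS : S.Exact := ShortComplex.exact_cokernel f
  have (n : ℤ) : Mono (f.f n) := inferInstance
  let σ (n : ℤ) : (S.map (HomologicalComplex.eval C _ n)).Splitting :=
    .ofExactOfRetraction _ (hS.map _) (retraction (f.f n) :) (IsSplitMono.id (f.f n))
      (inferInstanceAs (Epi ((HomologicalComplex.eval C _ n).map (cokernel.π f))))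
  exact ⟨_, (HomotopyCategory.distinguished_iff_iso_trianglehOfDegreewiseSplit _).2
    ⟨S, σ, ⟨Iso.refl _⟩⟩⟩

section TopInclusion

variable (X : CochainComplex C ℤ) (b : ℤ)

/-- The inclusion of the top degree term of a complex which vanishes in degrees above `b`. -/
noncomputable def topInclusion [X.IsStrictlyLE b] :
    (HomologicalComplex.single C (ComplexShape.up ℤ) b).obj (X.X b) ⟶ X :=
  HomologicalComplex.mkHomFromSingle (𝟙 _) fun k hk =>
    (X.isZero_of_isStrictlyLE b k (by grind [ComplexShape.up_Rel])).eq_of_tgt _ _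

variable [X.IsStrictlyLE b]

instance : IsIso ((topInclusion X b).f b) := by
  rw [topInclusion, HomologicalComplex.mkHomFromSingle_f]
  infer_instance

instance (n : ℤ) : IsSplitMono ((topInclusion X b).f n) := by
  obtain rfl | hn := eq_or_ne n b
  · infer_instance
  · exact ⟨⟨0, (HomologicalComplex.isZero_single_obj_X _ _ _ _ hn).eq_of_src _ _⟩⟩

instance (n : ℤ) : Epi ((cokernel.π (topInclusion X b)).f n) :=
  inferInstanceAs (Epi ((HomologicalComplex.eval C _ n).map (cokernel.π (topInclusion X b))))

lemma isZero_cokernel_topInclusion_X : IsZero ((cokernel (topInclusion X b)).X b) := by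
  refine IsZero.of_epi_eq_zero ((cokernel.π (topInclusion X b)).f b) ?_
  rw [← cancel_epi ((topInclusion X b).f b), comp_zero, ← HomologicalComplex.comp_f,
    cokernel.condition, HomologicalComplex.zero_f]

lemma isIso_cokernel_π_topInclusion_f {n : ℤ} (hn : n ≠ b) :
    IsIso ((cokernel.π (topInclusion X b)).f n) := by
  have : Mono ((cokernel.π (topInclusion X b)).f n) :=
    ((ShortComplex.exact_cokernel (topInclusion X b)).map (HomologicalComplex.eval C _ n)).mono_g
      ((HomologicalComplex.isZero_single_obj_X (ComplexShape.up ℤ) _ _ _ hn).eq_of_src _ _)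
  exact isIso_of_mono_of_epi _

instance : CochainComplex.IsStrictlyLE (cokernel (topInclusion X b)) (b - 1) := by
  rw [CochainComplex.isStrictlyLE_iff]
  intro n hn
  obtain rfl | hn' := eq_or_ne n b
  · exact isZero_cokernel_topInclusion_X X n
  · exact IsZero.of_epi ((cokernel.π (topInclusion X b)).f n)
      (X.isZero_of_isStrictlyLE b n (by omega))

instance (a : ℤ) [X.IsStrictlyGE a] :
    CochainComplex.IsStrictlyGE (cokernel (topInclusion X b)) a := by
  rw [CochainComplex.isStrictlyGE_iff]
  exact fun n hn => IsZero.of_epi ((cokernel.π (topInclusion X b)).f n)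
    (X.isZero_of_isStrictlyGE a n hn)

end TopInclusion

lemma prop_quotient_obj_of_bounded {X : CochainComplex C ℤ}
    (Q : ObjectProperty (HomotopyCategory C (ComplexShape.up ℤ)))
    [Q.IsClosedUnderIsomorphisms] [Q.ContainsZero] [Q.IsTriangulatedClosed₂]
    (a b : ℤ) [X.IsStrictlyGE a] [X.IsStrictlyLE b]
    (hQ : ∀ n, Q ((HomotopyCategory.singleFunctor C n).obj (X.X n))) :
    Q ((HomotopyCategory.quotient C (ComplexShape.up ℤ)).obj X) := by
  obtain ⟨N, hN⟩ : ∃ N : ℕ, b - N < a := ⟨(b - a + 1).toNat, by omega⟩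
  induction N generalizing X b with
  | zero =>
    have hX : IsZero X := (IsZero.iff_id_eq_zero X).2 <| HomologicalComplex.hom_ext _ _ fun n =>
      (lt_or_ge n a).elim (fun hn => (X.isZero_of_isStrictlyGE a n hn).eq_of_src _ _)
        fun hn => (X.isZero_of_isStrictlyLE b n (by omega)).eq_of_src _ _
    exact Q.prop_of_isZero (Functor.map_isZero _ hX)
  | succ N ih =>
    obtain ⟨δ, hδ⟩ := exists_distinguished_cokernel (topInclusion X b)
    refine Q.ext_of_isTriangulatedClosed₂ _ hδ (hQ b)
      (ih (X := cokernel (topInclusion X b)) (b := b - 1) (fun n => ?_) (by omega))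
    obtain rfl | hn := eq_or_ne n b
    · exact Q.prop_of_isZero (Functor.map_isZero _ (isZero_cokernel_topInclusion_X X n))
    · have := isIso_cokernel_π_topInclusion_f X b hn
      exact Q.prop_of_iso ((HomotopyCategory.singleFunctor C n).mapIso
        (asIso ((cokernel.π (topInclusion X b)).f n))) (hQ n)

end Devissage

section BoundedComplexes

variable {C : Type*} [Category* C] [Abelian C] (P : ObjectProperty C)

/-- The bounded cochain complexes all of whose terms satisfy `P`. -/
def boundedComplexes : ObjectProperty (CochainComplex C ℤ) := fun X =>
  (∀ n, P (X.X n)) ∧ ∃ a b : ℤ, X.IsStrictlyGE a ∧ X.IsStrictlyLE b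

/-- The category `K^b(P)`, as a property of objects of the homotopy category: being represented
by a bounded complex with terms in `P`. This property is not closed under isomorphisms. -/
def boundedHomotopy : ObjectProperty (HomotopyCategory C (ComplexShape.up ℤ)) :=
  (boundedComplexes P).strictMap (HomotopyCategory.quotient C (ComplexShape.up ℤ))

variable {P}

lemma boundedHomotopy_quotient_obj {X : CochainComplex C ℤ} (hX : boundedComplexes P X) :
    boundedHomotopy P ((HomotopyCategory.quotient C (ComplexShape.up ℤ)).obj X) :=
  (boundedComplexes P).strictMap_obj _ hX

lemma boundedHomotopy.prop_of_single {X : HomotopyCategory C (ComplexShape.up ℤ)}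
    (hX : boundedHomotopy P X) (Q : ObjectProperty (HomotopyCategory C (ComplexShape.up ℤ)))
    [Q.IsClosedUnderIsomorphisms] [Q.ContainsZero] [Q.IsTriangulatedClosed₂]
    (hQ : ∀ (n : ℤ) (M : C), P M → Q ((HomotopyCategory.singleFunctor C n).obj M)) : Q X := by
  obtain ⟨X, hX, a, b, _, _⟩ := hX
  exact prop_quotient_obj_of_bounded Q a b fun n => hQ n _ (hX n)

lemma boundedComplexes_shift {X : CochainComplex C ℤ} (hX : boundedComplexes P X) (n : ℤ) :
    boundedComplexes P (X⟦n⟧) := by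
  obtain ⟨hX, a, b, _, _⟩ := hX
  exact ⟨fun i => hX (i + n), a - n, b - n, X.isStrictlyGE_shift a n (a - n) (by omega),
    X.isStrictlyLE_shift b n (b - n) (by omega)⟩

instance : (boundedHomotopy P).IsStableUnderShift ℤ where
  isStableUnderShiftBy n :=
    { le_shift := by
        rintro _ ⟨X, hX⟩
        rw [ObjectProperty.prop_shift_iff, HomotopyCategory.shift_quotient_obj]
        exact boundedHomotopy_quotient_obj (boundedComplexes_shift hX n) }

variable [P.IsClosedUnderIsomorphisms]

lemma boundedComplexes_mappingCone [P.IsClosedUnderBinaryCoproducts]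
    {X Y : CochainComplex C ℤ} (hX : boundedComplexes P X) (hY : boundedComplexes P Y)
    (f : X ⟶ Y) :
    boundedComplexes P (CochainComplex.mappingCone f) := by
  obtain ⟨hX, a, b, _, _⟩ := hX
  obtain ⟨hY, a', b', _, _⟩ := hY
  refine ⟨fun n => ?_, min (a - 1) a', max b b',
    CochainComplex.isStrictlyGE_mappingCone f a a' _ (by omega) (by omega), ?_⟩
  · exact P.prop_of_iso (HomologicalComplex.homotopyCofiber.XIsoBiprod f n (n + 1) rfl).symm
      (P.prop_of_isColimit_binaryCofan (BinaryBiproduct.isColimit _ _) (hX _) (hY _))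
  · rw [CochainComplex.isStrictlyLE_iff]
    intro n hn
    exact (CochainComplex.mappingCone.isZero_X_iff f n).2
      ⟨X.isZero_of_isStrictlyLE b _ (by omega), Y.isZero_of_isStrictlyLE b' _ (by omega)⟩

instance [P.IsClosedUnderBinaryCoproducts] : (boundedHomotopy P).IsTriangulatedClosed₃ where
  ext₃' := by
    rintro ⟨_, _, Z, f, g, h⟩ hΔ ⟨X, hX⟩ ⟨Y, hY⟩
    obtain ⟨φ, rfl⟩ := (HomotopyCategory.quotient C (ComplexShape.up ℤ)).map_surjective f
    let e := isoTriangleOfIso₁₂ _ _ hΔ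
      (HomotopyCategory.mappingCone_triangleh_distinguished φ) (Iso.refl _) (Iso.refl _)
      ((Category.comp_id _).trans (Category.id_comp _).symm)
    exact ⟨_, boundedHomotopy_quotient_obj (boundedComplexes_mappingCone hX hY φ),
      ⟨Triangle.π₃.mapIso e⟩⟩

variable [P.ContainsZero]

lemma boundedComplexes_single {M : C} (hM : P M) (n : ℤ) :
    boundedComplexes P ((CochainComplex.singleFunctor C n).obj M) := by
  refine ⟨fun i => ?_, n, n, inferInstance, inferInstance⟩
  obtain rfl | hi := eq_or_ne i n
  · exact P.prop_of_iso (HomologicalComplex.singleObjXSelf (ComplexShape.up ℤ) i M).symm hM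
  · exact P.prop_of_isZero (HomologicalComplex.isZero_single_obj_X _ _ _ _ hi)

instance : (boundedHomotopy P).ContainsZero where
  exists_zero :=
    have ⟨_, hZ, hPZ⟩ := ObjectProperty.ContainsZero.exists_zero (P := P)
    ⟨_, (HomotopyCategory.singleFunctor C 0).map_isZero hZ,
      boundedHomotopy_quotient_obj (boundedComplexes_single hPZ 0)⟩

instance [P.IsClosedUnderBinaryCoproducts] : (boundedHomotopy P).IsTriangulated where
  toIsTriangulatedClosed₂ := .of_isTriangulatedClosed₃

end BoundedComplexes

section FullyFaithful

variable {C : Type*} [Category* C] [Abelian C] [HasDerivedCategory C] (P : ObjectProperty C)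

/-- `Ext^k(M, N) = 0` for all `k > 0` and all `M`, `N` satisfying `P`, where `Ext^k(M, N)` is
the group of morphisms `M ⟶ N⟦k⟧` in the derived category. -/
def ExtSelfOrthogonal : Prop :=
  ∀ ⦃M N : C⦄, P M → P N → ∀ k : ℤ, 0 < k →
    ∀ f : (DerivedCategory.singleFunctor C 0).obj M ⟶
      ((DerivedCategory.singleFunctor C 0).obj N)⟦k⟧, f = 0

variable {P}

lemma bijective_Qh_map_single_self (M N : C) (i : ℤ) :
    Function.Bijective (DerivedCategory.Qh.map :
      ((HomotopyCategory.singleFunctor C i).obj M ⟶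
        (HomotopyCategory.singleFunctor C i).obj N) → _) := by
  have surj : Function.Surjective
      ((HomotopyCategory.singleFunctor C i).map : (M ⟶ N) → _) := fun f => by
    obtain ⟨f, rfl⟩ := (HomotopyCategory.quotient C (ComplexShape.up ℤ)).map_surjective f
    obtain ⟨g, rfl⟩ := (HomologicalComplex.single C (ComplexShape.up ℤ) i).map_surjective f
    exact ⟨g, rfl⟩
  have bij : Function.Bijective
      (DerivedCategory.Qh.map ∘ ((HomotopyCategory.singleFunctor C i).map : (M ⟶ N) → _)) :=
    ⟨(DerivedCategory.singleFunctor C i).map_injective,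
      (DerivedCategory.singleFunctor C i).map_surjective⟩
  exact ⟨bij.1.of_comp_right surj, bij.2.of_comp⟩

lemma ExtSelfOrthogonal.eq_zero_of_ne (hP : ExtSelfOrthogonal P) {M N : C} (hM : P M) (hN : P N)
    {i j : ℤ} (hij : i ≠ j) (f : (DerivedCategory.singleFunctor C i).obj M ⟶
      (DerivedCategory.singleFunctor C j).obj N) : f = 0 := by
  obtain hlt | hgt := lt_or_gt_of_ne hij
  · exact DerivedCategory.TStructure.t.zero_of_isLE_of_isGE f i j hlt inferInstance inferInstance
  · let eM := ((DerivedCategory.singleFunctors C).shiftIso i 0 i (by omega)).app M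
    let eN := ((DerivedCategory.singleFunctors C).shiftIso i (j - i) j (by omega)).app N ≪≫
      (((DerivedCategory.singleFunctors C).shiftIso (i - j) (j - i) 0 (by omega)).app N).symm
    have hf : eM.inv ≫ f⟦i⟧' ≫ eN.hom = 0 := hP hM hN (i - j) (by omega) _
    apply (shiftFunctor (DerivedCategory C) i).map_injective
    rwa [Functor.map_zero, ← cancel_epi eM.inv, ← cancel_mono eN.hom, comp_zero, zero_comp,
      Category.assoc]

lemma ExtSelfOrthogonal.bijective_Qh_map_single (hP : ExtSelfOrthogonal P) {M N : C} (hM : P M)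
    (hN : P N) (i j : ℤ) :
    Function.Bijective (DerivedCategory.Qh.map :
      ((HomotopyCategory.singleFunctor C i).obj M ⟶
        (HomotopyCategory.singleFunctor C j).obj N) → _) := by
  obtain rfl | hij := eq_or_ne i j
  · exact bijective_Qh_map_single_self M N i
  · have zero_hom (f : (HomotopyCategory.singleFunctor C i).obj M ⟶
        (HomotopyCategory.singleFunctor C j).obj N) : f = 0 := by
      obtain ⟨f, rfl⟩ := (HomotopyCategory.quotient C (ComplexShape.up ℤ)).map_surjective f
      obtain rfl : f = 0 := HomologicalComplex.from_single_hom_ext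
        ((HomologicalComplex.isZero_single_obj_X _ _ _ _ hij).eq_of_tgt _ _)
      exact Functor.map_zero _ _ _
    exact ⟨fun f g _ => (zero_hom f).trans (zero_hom g).symm, fun f =>
      ⟨0, (Functor.map_zero _ _ _).trans (hP.eq_zero_of_ne hM hN hij f).symm⟩⟩

lemma ExtSelfOrthogonal.bijectiveOnShiftedHoms_single (hP : ExtSelfOrthogonal P) {M N : C}
    (hM : P M) (hN : P N) (i j : ℤ) :
    BijectiveOnShiftedHoms DerivedCategory.Qh ((HomotopyCategory.singleFunctor C i).obj M)
      ((HomotopyCategory.singleFunctor C j).obj N) := fun m n =>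
  bijective_map_of_iso
    (((HomotopyCategory.singleFunctors C).shiftIso m (i - m) i (by omega)).app M).symm
    (((HomotopyCategory.singleFunctors C).shiftIso n (j - n) j (by omega)).app N).symm
    (hP.bijective_Qh_map_single hM hN (i - m) (j - n))

lemma ExtSelfOrthogonal.bijective_Qh_map (hP : ExtSelfOrthogonal P)
    {X Y : HomotopyCategory C (ComplexShape.up ℤ)} (hX : boundedHomotopy P X)
    (hY : boundedHomotopy P Y) :
    Function.Bijective (DerivedCategory.Qh.map : (X ⟶ Y) → _) := by
  refine BijectiveOnShiftedHoms.bijective_map (hX.prop_of_single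
    (BijectiveOnShiftedHoms DerivedCategory.Qh · Y) fun i M hM => ?_)
  exact hY.prop_of_single (BijectiveOnShiftedHoms DerivedCategory.Qh _) fun j N hN =>
    hP.bijectiveOnShiftedHoms_single hM hN i j

lemma ExtSelfOrthogonal.full_ι_comp_Qh (hP : ExtSelfOrthogonal P) :
    ((boundedHomotopy P).ι ⋙ DerivedCategory.Qh).Full where
  map_surjective {X Y} f :=
    have ⟨g, hg⟩ := (hP.bijective_Qh_map X.property Y.property).2 f
    ⟨ObjectProperty.homMk g, hg⟩

lemma ExtSelfOrthogonal.isTriangulated_map_Qh (hP : ExtSelfOrthogonal P)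
    [P.IsClosedUnderIsomorphisms] [P.ContainsZero] [P.IsClosedUnderBinaryCoproducts] :
    ((boundedHomotopy P).map DerivedCategory.Qh).IsTriangulated := by
  have := hP.full_ι_comp_Qh
  rw [← Functor.essImage_ι_comp]
  infer_instance

end FullyFaithful

section Swindle

variable {C : Type*} [Category* C] [Preadditive C]

-- If `E` splits with image `W'`, then `W' ≅ X ⊞ W'`, and adding the image of `𝟙 - E` to both sides
-- gives `W ≅ X ⊞ W`. Written out, this isomorphism makes sense without splitting `E`.
lemma nonempty_iso_biprod_of_retract [HasBinaryBiproducts C] {X Y W : C} (h : Retract X Y)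
    (p : W ⟶ Y) (t : W ⟶ W) [IsIso (biprod.lift p t)] {E : W ⟶ W} (hE : E ≫ E = E)
    (hp : E ≫ p = p ≫ h.r ≫ h.i) (ht : E ≫ t = t ≫ E) : Nonempty (W ≅ X ⊞ W) := by
  let α := asIso (biprod.lift p t)
  have hα_snd : α.hom ≫ biprod.snd = t := biprod.lift_snd _ _
  have hα : E ≫ α.hom = α.hom ≫ biprod.map h.r (𝟙 W) ≫ biprod.map h.i E := by
    ext <;> simp [α, hp, ht]
  have hα_inv : α.inv ≫ E = biprod.map h.r (𝟙 W) ≫ biprod.map h.i E ≫ α.inv := by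
    rw [Iso.inv_comp_eq, ← reassoc_of% hα, Iso.hom_inv_id, Category.comp_id]
  have hE_compl : E ≫ (𝟙 W - E) = 0 := by rw [Preadditive.comp_sub, Category.comp_id, hE, sub_self]
  have hE_compl' : (𝟙 W - E) ≫ E = 0 := by rw [Preadditive.sub_comp, Category.id_comp, hE, sub_self]
  have hmap : biprod.map h.i E ≫ biprod.map h.r (𝟙 W) = biprod.map (𝟙 X) E := by ext <;> simp
  have hmap' : biprod.map (𝟙 X) E ≫ biprod.map h.i E = biprod.map h.i E := by ext <;> simp [hE]
  refine ⟨⟨E ≫ α.hom ≫ biprod.map h.r (𝟙 W) + (𝟙 W - E) ≫ biprod.inr,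
    biprod.map h.i E ≫ α.inv + biprod.snd ≫ (𝟙 W - E), ?_, ?_⟩⟩
  · have h₁₁ : E ≫ α.hom ≫ biprod.map h.r (𝟙 W) ≫ biprod.map h.i E ≫ α.inv = E := by
      rw [← reassoc_of% hα, Iso.hom_inv_id, Category.comp_id, hE]
    have h₁₂ : E ≫ α.hom ≫ biprod.map h.r (𝟙 W) ≫ biprod.snd ≫ (𝟙 W - E) = 0 := by
      rw [biprod.map_snd_assoc, Category.id_comp, reassoc_of% hα_snd, reassoc_of% ht, hE_compl,
        comp_zero]
    have h₂₁ : (𝟙 W - E) ≫ biprod.inr ≫ biprod.map h.i E ≫ α.inv = 0 := by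
      rw [biprod.inr_map_assoc, reassoc_of% hE_compl', zero_comp]
    have h₂₂ : (𝟙 W - E) ≫ biprod.inr ≫ (biprod.snd : X ⊞ W ⟶ W) ≫ (𝟙 W - E) = 𝟙 W - E := by
      rw [biprod.inr_snd_assoc, Preadditive.comp_sub, hE_compl', Category.comp_id, sub_zero]
    simp only [Preadditive.add_comp, Preadditive.comp_add, Category.assoc, h₁₁, h₁₂, h₂₁, h₂₂]
    abel
  · have h₁₁ : biprod.map h.i E ≫ α.inv ≫ E ≫ α.hom ≫ biprod.map h.r (𝟙 W) =
        biprod.map (𝟙 X) E := by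
      rw [reassoc_of% hα_inv, Iso.inv_hom_id_assoc, reassoc_of% hmap, reassoc_of% hmap', hmap]
    have h₁₂ : biprod.map h.i E ≫ α.inv ≫ (𝟙 W - E) = 0 := by
      rw [Preadditive.comp_sub, hα_inv, Preadditive.comp_sub, reassoc_of% hmap, reassoc_of% hmap',
        Category.comp_id, sub_self]
    simp only [Preadditive.add_comp, Preadditive.comp_add, Category.assoc, h₁₁, reassoc_of% h₁₂,
      reassoc_of% hE_compl']
    ext <;> simp [hE]

lemma sigma_map_add {J : Type*} [HasColimitsOfShape (Discrete J) C] {M N : J → C}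
    (f g : ∀ j, M j ⟶ N j) :
    Limits.Sigma.map (fun j => f j + g j) = Limits.Sigma.map f + Limits.Sigma.map g :=
  Sigma.hom_ext _ _ fun j => by simp

variable [HasColimitsOfShape (Discrete ℕ) C]

variable (C) in
/-- The functor sending `M` to the countable copower `M ⨿ M ⨿ ⋯`. -/
noncomputable def copowerNat : C ⥤ C where
  obj M := ∐ fun _ : ℕ => M
  map f := Limits.Sigma.map fun _ => f

instance : (copowerNat C).Additive where
  map_add {_ _ f g} := sigma_map_add (fun _ => f) (fun _ => g)

/-- The projection of a countable copower onto its summand of index `0`. -/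
noncomputable def sigmaHead (M : C) : (∐ fun _ : ℕ => M) ⟶ M :=
  Limits.Sigma.desc fun
    | 0 => 𝟙 M
    | _ + 1 => 0

/-- The projection of a countable copower onto its summands of positive index, reindexed by
`n + 1 ↦ n`. -/
noncomputable def sigmaTail (M : C) : (∐ fun _ : ℕ => M) ⟶ ∐ fun _ : ℕ => M :=
  Limits.Sigma.desc fun
    | 0 => 0
    | n + 1 => Sigma.ι (fun _ : ℕ => M) n

instance isIso_lift_sigmaHead_sigmaTail [HasBinaryBiproducts C] (M : C) :
    IsIso (biprod.lift (sigmaHead M) (sigmaTail M)) := by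
  refine ⟨biprod.desc (Sigma.ι (fun _ : ℕ => M) 0)
    (Limits.Sigma.desc fun n => Sigma.ι (fun _ : ℕ => M) (n + 1)), ?_, ?_⟩
  · refine Sigma.hom_ext _ _ fun n => ?_
    cases n <;> simp [sigmaHead, sigmaTail]
  · ext <;> simp [sigmaHead, sigmaTail]

variable (C) in
/-- The natural transformation with components `sigmaHead`. -/
noncomputable def copowerNatHead : copowerNat C ⟶ 𝟭 C where
  app := sigmaHead
  naturality M N f :=
    show Limits.Sigma.map (fun _ => f) ≫ sigmaHead N = sigmaHead M ≫ f from
      Sigma.hom_ext _ _ fun n => by cases n <;> simp [sigmaHead]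

variable (C) in
/-- The natural transformation with components `sigmaTail`. -/
noncomputable def copowerNatTail : copowerNat C ⟶ copowerNat C where
  app := sigmaTail
  naturality M N f :=
    show Limits.Sigma.map (fun _ => f) ≫ sigmaTail N =
        sigmaTail M ≫ Limits.Sigma.map (fun _ => f) from
      Sigma.hom_ext _ _ fun n => by cases n <;> simp [sigmaTail]

end Swindle

section Retracts

variable {C D : Type*} [Category* C] [Category* D]

lemma isIso_map_biprod_lift_iff [Preadditive C] [Preadditive D] (F : C ⥤ D) [F.Additive]
    {X Y Z : C} [HasBinaryBiproduct Y Z] [HasBinaryBiproduct (F.obj Y) (F.obj Z)]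
    (f : X ⟶ Y) (g : X ⟶ Z) :
    IsIso (F.map (biprod.lift f g)) ↔ IsIso (biprod.lift (F.map f) (F.map g)) := by
  have := preservesBinaryBiproducts_of_preservesBiproducts F
  rw [← biprod.map_lift_mapBiprod, isIso_comp_right_iff]

lemma isIso_biprod_lift_of_components [Preadditive C] [HasBinaryBiproducts C] {ι : Type*}
    {c : ComplexShape ι} {X Y Z : HomologicalComplex C c} (f : X ⟶ Y) (g : X ⟶ Z)
    (h : ∀ i, IsIso (biprod.lift (f.f i) (g.f i))) : IsIso (biprod.lift f g) := by
  have (i : ι) : IsIso ((biprod.lift f g).f i) :=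
    (isIso_map_biprod_lift_iff (HomologicalComplex.eval C c i) f g).2 (h i)
  exact HomologicalComplex.Hom.isIso_of_components _

variable [Abelian C] [HasColimitsOfShape (Discrete ℕ) C] {P : ObjectProperty C}

lemma boundedComplexes_copowerNat [P.IsClosedUnderColimitsOfShape (Discrete ℕ)]
    {Y : CochainComplex C ℤ} (hY : boundedComplexes P Y) :
    boundedComplexes P (((copowerNat C).mapHomologicalComplex _).obj Y) := by
  obtain ⟨hY, a, b, _, _⟩ := hY
  refine ⟨fun n => P.prop_colimit _ fun _ => hY n, a, b, ?_, ?_⟩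
  · rw [CochainComplex.isStrictlyGE_iff]
    exact fun n hn => (copowerNat C).map_isZero (Y.isZero_of_isStrictlyGE a n hn)
  · rw [CochainComplex.isStrictlyLE_iff]
    exact fun n hn => (copowerNat C).map_isZero (Y.isZero_of_isStrictlyLE b n hn)

variable [HasDerivedCategory C]

lemma nonempty_iso_biprod_of_retract_Q {Y : CochainComplex C ℤ} {X : DerivedCategory C}
    (h : Retract X (DerivedCategory.Q.obj Y)) {e : Y ⟶ Y}
    (he : DerivedCategory.Q.map e = h.r ≫ h.i)
    (hee : (HomotopyCategory.quotient C (ComplexShape.up ℤ)).map (e ≫ e) =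
      (HomotopyCategory.quotient C (ComplexShape.up ℤ)).map e) :
    Nonempty (DerivedCategory.Q.obj (((copowerNat C).mapHomologicalComplex _).obj Y) ≅
      X ⊞ DerivedCategory.Q.obj (((copowerNat C).mapHomologicalComplex _).obj Y)) := by
  let head : ((copowerNat C).mapHomologicalComplex _).obj Y ⟶ Y :=
    (NatTrans.mapHomologicalComplex (copowerNatHead C) (ComplexShape.up ℤ)).app Y
  let tail := (NatTrans.mapHomologicalComplex (copowerNatTail C) (ComplexShape.up ℤ)).app Y
  let E := ((copowerNat C).mapHomologicalComplex (ComplexShape.up ℤ)).map e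
  have : IsIso (biprod.lift head tail) :=
    isIso_biprod_lift_of_components _ _ fun n => isIso_lift_sigmaHead_sigmaTail (Y.X n)
  have : IsIso (biprod.lift (DerivedCategory.Q.map head) (DerivedCategory.Q.map tail)) :=
    (isIso_map_biprod_lift_iff _ _ _).1 inferInstance
  have hE : (HomotopyCategory.quotient C (ComplexShape.up ℤ)).map (E ≫ E) =
      (HomotopyCategory.quotient C (ComplexShape.up ℤ)).map E := by
    rw [← Functor.map_comp]
    exact congrArg ((copowerNat C).mapHomotopyCategory (ComplexShape.up ℤ)).map hee
  refine nonempty_iso_biprod_of_retract h (DerivedCategory.Q.map head) (DerivedCategory.Q.map tail)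
    (E := DerivedCategory.Q.map E) ?_ ?_ ?_
  · rw [← Functor.map_comp]
    exact congrArg DerivedCategory.Qh.map hE
  · rw [← he, ← Functor.map_comp, ← Functor.map_comp]
    exact congrArg DerivedCategory.Q.map
      (NatTrans.mapHomologicalComplex_naturality (copowerNatHead C) e)
  · rw [← Functor.map_comp, ← Functor.map_comp]
    exact congrArg DerivedCategory.Q.map
      (NatTrans.mapHomologicalComplex_naturality (copowerNatTail C) e)

lemma ExtSelfOrthogonal.isStableUnderRetracts_map_Qh (hP : ExtSelfOrthogonal P)
    [P.IsClosedUnderIsomorphisms] [P.ContainsZero] [P.IsClosedUnderBinaryCoproducts]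
    [P.IsClosedUnderColimitsOfShape (Discrete ℕ)] :
    ((boundedHomotopy P).map DerivedCategory.Qh).IsStableUnderRetracts where
  of_retract := by
    rintro X Z h ⟨_, ⟨Y, hY⟩, ⟨u⟩⟩
    have hQY := boundedHomotopy_quotient_obj hY
    have h' : Retract X (DerivedCategory.Qh.obj
        ((HomotopyCategory.quotient C (ComplexShape.up ℤ)).obj Y)) := h.trans (Retract.ofIso u.symm)
    obtain ⟨e, he⟩ := (hP.bijective_Qh_map hQY hQY).2 (h'.r ≫ h'.i)
    obtain ⟨e, rfl⟩ := (HomotopyCategory.quotient C (ComplexShape.up ℤ)).map_surjective e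
    have hee : (HomotopyCategory.quotient C (ComplexShape.up ℤ)).map (e ≫ e) =
        (HomotopyCategory.quotient C (ComplexShape.up ℤ)).map e :=
      (hP.bijective_Qh_map hQY hQY).1 (by simp [he])
    obtain ⟨w⟩ := nonempty_iso_biprod_of_retract_Q h' he hee
    have hW : (boundedHomotopy P).map DerivedCategory.Qh
        (DerivedCategory.Q.obj (((copowerNat C).mapHomologicalComplex _).obj Y)) :=
      ObjectProperty.prop_map_obj _ _
        (boundedHomotopy_quotient_obj (boundedComplexes_copowerNat hY))
    have := hP.isTriangulated_map_Qh
    exact ObjectProperty.ext_of_isTriangulatedClosed₁ _ _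
      (binaryBiproductTriangle_distinguished X _) (ObjectProperty.prop_of_iso _ w hW) hW

end Retracts

section AddClosure

variable {C : Type u} [Category.{v} C] [HasCoproducts.{v} C] (T : C)

/-- `Sum(T)`: the coproducts of copies of `T`. -/
def copowers : ObjectProperty C := .ofObj fun I : Type v => ∐ fun _ : I => T

/-- `Add(T)` as a property of objects: the retracts of coproducts of copies of `T`. -/
abbrev addClosure : ObjectProperty C := (copowers T).retractClosure

lemma copowers_sigma (I : Type v) : copowers T (∐ fun _ : I => T) := ⟨I⟩

variable {T} in
lemma mem_addT_iff {X : C} : X ∈ addT T ↔ addClosure T X := by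
  constructor
  · rintro ⟨I, s, r, hsr⟩
    exact ⟨_, copowers_sigma T I, ⟨⟨s, r, hsr⟩⟩⟩
  · rintro ⟨_, ⟨I⟩, ⟨h⟩⟩
    exact ⟨I, h.i, h.r, h.retract⟩

instance : (addClosure T).Nonempty :=
  ObjectProperty.nonempty_of_prop
    ((copowers T).le_retractClosure _ (copowers_sigma T PEmpty))

variable {T} in
lemma addClosure_sigma {J : Type v} {M : J → C} (hM : ∀ j, addClosure T (M j)) :
    addClosure T (∐ M) := by
  have hM' (j : J) : ∃ I : Type v, Nonempty (Retract (M j) (∐ fun _ : I => T)) := by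
    obtain ⟨_, ⟨I⟩, h⟩ := hM j
    exact ⟨I, h⟩
  choose I h using hM'
  let retractCopower (j : J) := (h j).some
  let retractSigma : Retract (∐ M) (∐ fun j => ∐ fun _ : I j => T) :=
    { i := Limits.Sigma.map fun j => (retractCopower j).i
      r := Limits.Sigma.map fun j => (retractCopower j).r }
  exact ⟨_, copowers_sigma T (Σ j, I j),
    ⟨retractSigma.trans (Retract.ofIso (sigmaSigmaIso I fun _ _ => T))⟩⟩

instance (J : Type v) : (addClosure T).IsClosedUnderColimitsOfShape (Discrete J) where
  colimitsOfShape_le := by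
    rintro X ⟨h⟩
    let e : (∐ fun j => h.diag.obj ⟨j⟩) ≅ X :=
      (HasColimit.isoOfNatIso Discrete.natIsoFunctor.symm).trans
        ((colimit.isColimit h.diag).coconePointUniqueUpToIso h.isColimit)
    exact (addClosure T).prop_of_iso e (addClosure_sigma fun j => h.prop_diag_obj ⟨j⟩)

lemma isClosedUnderColimitsOfShape_addClosure (J : Type) :
    (addClosure T).IsClosedUnderColimitsOfShape (Discrete J) :=
  .of_equivalence (Discrete.equivalence Equiv.ulift.{v})

instance : (addClosure T).IsClosedUnderBinaryCoproducts :=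
  isClosedUnderColimitsOfShape_addClosure T WalkingPair

instance : (addClosure T).IsClosedUnderColimitsOfShape (Discrete ℕ) :=
  isClosedUnderColimitsOfShape_addClosure T ℕ

end AddClosure

section ExtVanishing

variable {C : Type u} [Category.{v} C] [Abelian C] [HasDerivedCategory C]

lemma ExtSelfOrthogonal.retractClosure {P : ObjectProperty C} (hP : ExtSelfOrthogonal P) :
    ExtSelfOrthogonal P.retractClosure := by
  rintro M N ⟨M', hM', ⟨hM⟩⟩ ⟨N', hN', ⟨hN⟩⟩ k hk f
  let retractM := hM.map (DerivedCategory.singleFunctor C 0)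
  let retractN := hN.map (DerivedCategory.singleFunctor C 0 ⋙ shiftFunctor _ k)
  have hf : retractM.r ≫ f ≫ retractN.i = 0 := hP hM' hN' k hk _
  calc f = retractM.i ≫ (retractM.r ≫ f ≫ retractN.i) ≫ retractN.r := by
        simp only [Category.assoc, retractN.retract, retractM.retract_assoc]
        exact (Category.comp_id f).symm
    _ = 0 := by rw [hf, zero_comp, comp_zero]

lemma extSelfOrthogonal_copowers [HasCoproducts.{v} C] [HasCoproducts.{v} (DerivedCategory C)]
    {T : C}
    (hcoprod : ∀ I : Type v, IsIso (Sigma.desc fun i : I =>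
      (DerivedCategory.singleFunctor C 0).map (Sigma.ι (fun _ : I => T) i)))
    (hExt : ∀ k : ℤ, 0 < k → ∀ I : Type v,
      ∀ f : (DerivedCategory.singleFunctor C 0).obj T ⟶
        ((DerivedCategory.singleFunctor C 0).obj (∐ fun _ : I => T))⟦k⟧, f = 0) :
    ExtSelfOrthogonal (copowers T) := by
  rintro _ _ ⟨I⟩ ⟨J⟩ k hk f
  have := hcoprod I
  rw [← cancel_epi (Sigma.desc fun i : I =>
    (DerivedCategory.singleFunctor C 0).map (Sigma.ι (fun _ : I => T) i)), comp_zero]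
  exact Sigma.hom_ext _ _ fun i => (hExt k hk J _).trans comp_zero.symm

end ExtVanishing

section Thick

open ZeroObject in
lemma isThickSet_iff {D : Type*} [Category* D] [HasZeroObject D] [Preadditive D] [HasShift D ℤ]
    [∀ n : ℤ, (shiftFunctor D n).Additive] [Pretriangulated D] {S : Set D} :
    IsThickSet D S ↔
      ObjectProperty.IsTriangulated (· ∈ S) ∧ ObjectProperty.IsStableUnderRetracts (· ∈ S) := by
  constructor
  · intro hS
    have : ObjectProperty.IsClosedUnderIsomorphisms (· ∈ S) := ⟨fun e => hS.iso e⟩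
    exact ⟨
      { exists_zero := ⟨0, isZero_zero D, hS.zero _ (isZero_zero D)⟩
        isStableUnderShiftBy n := ⟨fun X hX => hS.shift hX n⟩
        toIsTriangulatedClosed₂ := .mk' hS.ext₂ },
      ⟨fun h => hS.summand ⟨h.i, h.r, h.retract⟩⟩⟩
  · rintro ⟨_, _⟩
    exact
      { zero Z hZ := ObjectProperty.prop_of_isZero (· ∈ S) hZ
        iso X Y e := ObjectProperty.prop_of_iso (· ∈ S) e
        shift X hX n := ObjectProperty.le_shift (· ∈ S) n X hX
        ext₂ := ObjectProperty.ext_of_isTriangulatedClosed₂ (· ∈ S)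
        summand X Y := fun ⟨s, r, hsr⟩ => ObjectProperty.prop_of_retract (· ∈ S) ⟨s, r, hsr⟩ }

variable {C : Type u} [Category.{v} C] [Abelian C]

lemma isBoundedAddT_iff [HasCoproducts.{v} C] {T : C} {X : CochainComplex C ℤ} :
    isBoundedAddT T X ↔ boundedComplexes (addClosure T) X := by
  simp only [isBoundedAddT, boundedComplexes, mem_addT_iff, CochainComplex.isStrictlyGE_iff,
    CochainComplex.isStrictlyLE_iff, or_imp, forall_and]

variable [HasDerivedCategory C]

lemma boundedAddTSet_eq [HasCoproducts.{v} C] (T : C) :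
    boundedAddTSet T = {Z | (boundedHomotopy (addClosure T)).map DerivedCategory.Qh Z} := by
  ext Z
  constructor
  · rintro ⟨X, hX, ⟨e⟩⟩
    exact ⟨_, boundedHomotopy_quotient_obj (isBoundedAddT_iff.1 hX), ⟨e.symm⟩⟩
  · rintro ⟨_, ⟨X, hX⟩, ⟨e⟩⟩
    exact ⟨X, isBoundedAddT_iff.2 hX, ⟨e.symm⟩⟩

lemma boundedHomotopy_map_Qh_single {P : ObjectProperty C} [P.IsClosedUnderIsomorphisms]
    [P.ContainsZero] {M : C} (hM : P M) :
    (boundedHomotopy P).map DerivedCategory.Qh ((DerivedCategory.singleFunctor C 0).obj M) :=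
  ⟨_, boundedHomotopy_quotient_obj (boundedComplexes_single hM 0),
    ⟨((DerivedCategory.singleFunctorIsoCompQ C 0).app M).symm⟩⟩

lemma boundedHomotopy_map_Qh_le {P : ObjectProperty C} (Q : ObjectProperty (DerivedCategory C))
    [Q.IsTriangulated] [Q.IsClosedUnderIsomorphisms]
    (hPQ : ∀ M, P M → Q ((DerivedCategory.singleFunctor C 0).obj M)) :
    (boundedHomotopy P).map DerivedCategory.Qh ≤ Q := by
  rintro Z ⟨X, hX, ⟨e⟩⟩
  refine Q.prop_of_iso e (hX.prop_of_single (Q.inverseImage DerivedCategory.Qh) fun n M hM => ?_)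
  have hshift : Q (((DerivedCategory.singleFunctor C 0).obj M)⟦-n⟧) := Q.le_shift _ _ (hPQ M hM)
  exact Q.prop_of_iso
    (((DerivedCategory.singleFunctors C).shiftIso (-n) n 0 (by omega)).app M) hshift

variable [HasCoproducts.{v} C] {T : C}

lemma isThickSet_boundedAddTSet (hT : ExtSelfOrthogonal (addClosure T)) :
    IsThickSet (DerivedCategory C) (boundedAddTSet T) := by
  have : HasCoproducts.{0} C := has_smallest_coproducts_of_hasCoproducts.{v}
  rw [boundedAddTSet_eq, isThickSet_iff]
  exact ⟨hT.isTriangulated_map_Qh, hT.isStableUnderRetracts_map_Qh⟩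

lemma sumTSet_subset_boundedAddTSet : sumTSet T ⊆ boundedAddTSet T := by
  rintro Z ⟨I, ⟨e⟩⟩
  rw [boundedAddTSet_eq]
  exact ((boundedHomotopy (addClosure T)).map DerivedCategory.Qh).prop_of_iso e.symm
    (boundedHomotopy_map_Qh_single ((copowers T).le_retractClosure _ (copowers_sigma T I)))

lemma boundedAddTSet_subset_of_isThickSet {S : Set (DerivedCategory C)}
    (hS : IsThickSet (DerivedCategory C) S) (hTS : sumTSet T ⊆ S) : boundedAddTSet T ⊆ S := by
  obtain ⟨_, _⟩ := isThickSet_iff.1 hS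
  have hsingle (M : C) (hM : addClosure T M) : (DerivedCategory.singleFunctor C 0).obj M ∈ S := by
    obtain ⟨_, ⟨I⟩, ⟨h⟩⟩ := hM
    exact ObjectProperty.prop_of_retract (· ∈ S) (h.map (DerivedCategory.singleFunctor C 0))
      (hTS ⟨I, ⟨Iso.refl _⟩⟩)
  rw [boundedAddTSet_eq]
  exact boundedHomotopy_map_Qh_le (· ∈ S) hsingle

end Thick

end BoundedAddComplex

open BoundedAddComplex

/-- Let `A` be an abelian category whose derived category has Hom sets and coproducts, and let
`T` be an object of `A` such that (i) the coproduct `T^{(I)}` is the same in `A` and in `D(A)`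
for every set `I` and (ii) `Ext^k_A(T, T^{(I)}) = 0` for all `k > 0` and all sets `I`.  Then
the composite `K^b(Add(T)) ↪ K(A) → D(A)` is fully faithful, and the smallest thick
subcategory of `D(A)` containing `Sum(T)` consists precisely of the complexes isomorphic in
`D(A)` to bounded complexes of objects of `Add(T)`. -/
theorem stmt13
    (hsame : ∀ I : Type v, IsIso (Sigma.desc
      (fun i : I => (DerivedCategory.singleFunctor A 0).map
        (Sigma.ι (fun _ : I => T) i))))
    (hext : ∀ (k : ℤ), 0 < k → ∀ I : Type v,
      ∀ f : (DerivedCategory.singleFunctor A 0).obj T ⟶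
        ((DerivedCategory.singleFunctor A 0).obj (∐ (fun _ : I => T)))⟦k⟧, f = 0) :
    (∀ X Y : CochainComplex A ℤ, isBoundedAddT T X → isBoundedAddT T Y →
      Function.Bijective (fun f :
          ((HomotopyCategory.quotient A (ComplexShape.up ℤ)).obj X ⟶
            (HomotopyCategory.quotient A (ComplexShape.up ℤ)).obj Y) =>
        DerivedCategory.Qh.map f)) ∧
    IsThickSet (DerivedCategory A) (boundedAddTSet T) ∧
    sumTSet T ⊆ boundedAddTSet T ∧
    (∀ S : Set (DerivedCategory A), IsThickSet (DerivedCategory A) S →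
      sumTSet T ⊆ S → boundedAddTSet T ⊆ S) := by
  have hT : ExtSelfOrthogonal (addClosure T) :=
    (extSelfOrthogonal_copowers hsame hext).retractClosure
  refine ⟨fun X Y hX hY => ?_, isThickSet_boundedAddTSet hT, sumTSet_subset_boundedAddTSet,
    fun S => boundedAddTSet_subset_of_isThickSet⟩
  exact hT.bijective_Qh_map (boundedHomotopy_quotient_obj (isBoundedAddT_iff.1 hX))
    (boundedHomotopy_quotient_obj (isBoundedAddT_iff.1 hY))
end

section
/- Let A be an AB3 abelian category, T an object of A satisfying: coproducts of copies of T are the same in A and D(A) and Ext^k_A(T, T^{(I)}) = 0 for all k > 0 and sets I. Let Y = ⋂_{k>0} Ker(Ext^k_A(T, ?)) be the class of objects N with Ext^k_A(T,N) = 0 for all k > 0. If there exists m ∈ ℕ with Pres^m(T) = Y, then Pres^m(Y) ⊆ Y; that is, for any exact sequence Y^0 → Y^1 → ⋯ → Y^m in A with all Y^j ∈ Y, the cokernel of the last map lies in Y. -/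
open CategoryTheory CategoryTheory.Limits CategoryTheory.Pretriangulated

universe w v u

variable {A : Type u} [Category.{v} A] [Abelian A] [HasCoproducts.{v} A]
  [HasDerivedCategory.{w} A] [HasCoproducts.{v} (DerivedCategory A)] (T : A)

/-- `Sum(T)`: objects isomorphic to a set-indexed coproduct of copies of `T`. -/
def sumT : Set A := {X | ∃ I : Type v, Nonempty (X ≅ ∐ (fun _ : I => T))}

/-- `Y = ⋂_{k>0} Ker(Ext^k_A(T, ?))`, with `Ext` computed as morphisms in the derived
category. -/
def YSet : Set A :=
  {N | ∀ k : ℤ, 0 < k → ∀ f : (DerivedCategory.singleFunctor A 0).obj T ⟶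
    ((DerivedCategory.singleFunctor A 0).obj N)⟦k⟧, f = 0}

/-- `Pres^n(T)`: objects `X` admitting an exact sequence
`Σ^{-n} → ⋯ → Σ^{-1} → Σ^0 → X → 0` with all `Σ^{-k}` in `Sum(T)`. -/
def presSet (n : ℕ) : Set A :=
  {X | ∃ S : ComposableArrows A (n + 1), S.Exact ∧ Epi (S.map' n (n + 1)) ∧
    (∀ (i : ℕ) (hi : i ≤ n), S.obj' i (by omega) ∈ sumT T) ∧
    Nonempty (S.obj' (n + 1) ≅ X)}

/-!
Since `Pres^m(T) = Y`, every `N ∈ Y` is a quotient of a coproduct of copies of `T`, so its canonical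
`Sum(T)`-precover is an epimorphism; its kernel is again in `Y`, because `Sum(T) ⊆ Pres^m(T) = Y`
and every morphism from `T` to `N` lifts to the precover. As `Y` is closed under extensions, pulling
back along these precovers replaces, one term at a time, the objects of an exact sequence
`Y^0 → ⋯ → Y^m → X → 0` by objects of `Sum(T)`: each replacement changes the remaining syzygy by an
extension with kernel in `Y`, which is absorbed into the next term. Hence `X ∈ Pres^m(T) = Y`.
-/

section PartialResolution

variable {C : Type*} [Category* C] [Abelian C] {P Q : ObjectProperty C}

lemma isPullback_kernel_map_comp {X Y Z : C} (q : X ⟶ Y) (p : Y ⟶ Z) :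
    IsPullback (kernel.map (q ≫ p) p q (𝟙 Z) (by simp)) (kernel.ι (q ≫ p)) (kernel.ι p) q :=
  .of_isLimit' ⟨by simp⟩ <| PullbackCone.IsLimit.mk _
    (fun s => kernel.lift _ s.snd (by simp [← reassoc_of% s.condition]))
    (fun s => by simp [← cancel_mono (kernel.ι p), s.condition])
    (fun s => by simp)
    (fun s m _ hm => by simp [← cancel_mono (kernel.ι (q ≫ p)), hm])

lemma prop_of_isPullback_of_epi [P.IsClosedUnderIsomorphisms] [P.IsClosedUnderExtensions]
    {W Y Z' Z : C} {t : W ⟶ Y} {l : W ⟶ Z'} {r : Y ⟶ Z} {g : Z' ⟶ Z}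
    (sq : IsPullback t l r g) [Epi t] (hY : P Y) (hg : P (kernel g)) : P W := by
  have := isIso_kernel_map_of_isPullback sq
  have hker : P (kernel t) := P.prop_of_iso (asIso (kernel.map _ _ _ _ sq.w)).symm hg
  exact P.prop_X₂_of_shortExact
    (.mk' (ShortComplex.exact_kernel t) inferInstance inferInstance) hker hY

/-- `HasPartialResolution P n X`: there is an exact sequence `P_{n-1} → ⋯ → P_0 → X → 0` with `n`
terms satisfying `P`, encoded by recursion on kernels of epimorphisms. Thus `Pres^n` corresponds to
`HasPartialResolution _ (n + 1)`, and `HasPartialResolution _ 0` is no condition. -/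
def HasPartialResolution (P : ObjectProperty C) : ℕ → ObjectProperty C
  | 0 => ⊤
  | n + 1 => fun X => ∃ (Y : C) (p : Y ⟶ X), Epi p ∧ P Y ∧ HasPartialResolution P n (kernel p)

namespace HasPartialResolution

instance isClosedUnderIsomorphisms (P : ObjectProperty C) (n : ℕ) :
    (HasPartialResolution P n).IsClosedUnderIsomorphisms := by
  induction n with
  | zero => exact inferInstanceAs (⊤ : ObjectProperty C).IsClosedUnderIsomorphisms
  | succ n ih =>
    refine ⟨fun {X X'} e ⟨Y, p, _, hY, hp⟩ => ⟨Y, p ≫ e.hom, inferInstance, hY, ?_⟩⟩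
    exact (HasPartialResolution P n).prop_of_iso (kernelCompMono p e.hom).symm hp

lemma of_prop [P.IsClosedUnderIsomorphisms] [P.ContainsZero] {X : C} (hX : P X)
    (n : ℕ) : HasPartialResolution P n X := by
  induction n generalizing X with
  | zero => trivial
  | succ n ih =>
    exact ⟨X, 𝟙 X, inferInstance, hX, ih (P.prop_of_isZero (isZero_kernel_of_mono (𝟙 X)))⟩

lemma of_epi_of_prop_kernel [P.IsClosedUnderIsomorphisms] [P.IsClosedUnderExtensions]
    {n : ℕ} {Z' Z : C} (g : Z' ⟶ Z) [Epi g] (hg : P (kernel g))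
    (hZ : HasPartialResolution P n Z) : HasPartialResolution P n Z' := by
  cases n with
  | zero => trivial
  | succ n =>
    obtain ⟨Y, r, _, hY, hr⟩ := hZ
    have sq := IsPullback.of_hasPullback r g
    have := isIso_kernel_map_of_isPullback sq.flip
    exact ⟨pullback r g, pullback.snd r g, inferInstance, prop_of_isPullback_of_epi sq hY hg,
      (HasPartialResolution P n).prop_of_iso (asIso (kernel.map _ _ _ _ sq.flip.w)).symm hr⟩

lemma of_epi_covers [P.IsClosedUnderIsomorphisms] [P.IsClosedUnderExtensions]
    (hcover : ∀ Y, P Y → ∃ (X : C) (q : X ⟶ Y), Epi q ∧ Q X ∧ P (kernel q)) {n : ℕ} {X : C}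
    (hX : HasPartialResolution P n X) : HasPartialResolution Q n X := by
  induction n generalizing X with
  | zero => trivial
  | succ n ih =>
    obtain ⟨Y, p, _, hY, hp⟩ := hX
    obtain ⟨Y', q, _, hY', hq⟩ := hcover Y hY
    have sq := isPullback_kernel_map_comp q p
    have := isIso_kernel_map_of_isPullback sq
    have : Epi (kernel.map (q ≫ p) p q (𝟙 X) (by simp)) := Abelian.epi_fst_of_isLimit _ _ sq.isLimit
    exact ⟨Y', q ≫ p, inferInstance, hY', ih <| of_epi_of_prop_kernel _
      (P.prop_of_iso (asIso (kernel.map _ _ _ _ sq.w)).symm hq) hp⟩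

lemma abelianImage_of_exact {m : ℕ} {S : ComposableArrows C m}
    (hS : S.Exact) (hP : ∀ (i : ℕ) (hi : i ≤ m), P (S.obj' i)) (i : ℕ) (hi : i + 1 ≤ m) :
    HasPartialResolution P (i + 1) (Abelian.image (S.map' i (i + 1))) := by
  induction i with
  | zero => exact ⟨_, Abelian.factorThruImage _, inferInstance, hP 0 (by omega), trivial⟩
  | succ i ih =>
    let e : Abelian.image (S.map' i (i + 1)) ≅
        kernel (Abelian.factorThruImage (S.map' (i + 1) (i + 2))) :=
      (hS.exact i).isLimitImage.conePointUniqueUpToIso (limit.isLimit _) ≪≫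
        kernelIsoOfEq (Abelian.image.fac _).symm ≪≫ kernelCompMono _ _
    exact ⟨_, Abelian.factorThruImage _, inferInstance, hP (i + 1) (by omega),
      (HasPartialResolution P (i + 1)).prop_of_iso e (ih (by omega))⟩

lemma cokernel_of_exact {m : ℕ} {S : ComposableArrows C m}
    (hS : S.Exact) (hP : ∀ (i : ℕ) (hi : i ≤ m), P (S.obj' i)) :
    HasPartialResolution P (m + 1) (cokernel (S.map' (m - 1) m m.pred_le)) := by
  refine ⟨_, cokernel.π _, inferInstance, hP m le_rfl, ?_⟩
  cases m with
  | zero => trivial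
  | succ m => exact abelianImage_of_exact hS hP m le_rfl

end HasPartialResolution

/-- `S` is an exact sequence `P_n → ⋯ → P_0 → X' → 0` with all `P_i` satisfying `P` and `X' ≅ X`:
the witness in the definition of `Pres^n`, for an arbitrary class `P`. Note that `S.obj' i` is
`P_{n-i}`. -/
structure IsPresentation (P : ObjectProperty C) (X : C) {n : ℕ} (S : ComposableArrows C (n + 1)) :
    Prop where
  exact : S.Exact
  epi : Epi (S.map' n (n + 1))
  prop : ∀ (i : ℕ) (hi : i ≤ n), P (S.obj' i (by omega))
  nonempty_iso : Nonempty (S.obj' (n + 1) ≅ X)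

namespace IsPresentation

lemma mk₁ {X Y : C} (p : Y ⟶ X) [Epi p] (hY : P Y) :
    IsPresentation P X (ComposableArrows.mk₁ p) where
  exact := ComposableArrows.exact₁ _
  epi := ‹Epi p›
  prop i hi := by
    obtain rfl : i = 0 := by omega
    exact hY
  nonempty_iso := ⟨Iso.refl _⟩

lemma precomp {X : C} {n : ℕ} {S : ComposableArrows C (n + 1)}
    (hS : IsPresentation P X S) {Y : C} (p : Y ⟶ kernel (S.map' 0 1)) [Epi p] (hY : P Y) :
    IsPresentation P X (S.precomp (p ≫ kernel.ι (S.map' 0 1))) where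
  exact := by
    let φ : ShortComplex.mk (p ≫ kernel.ι (S.map' 0 1)) (S.map' 0 1) (by
          rw [Category.assoc, kernel.condition, comp_zero]) ⟶
        ShortComplex.mk (kernel.ι (S.map' 0 1)) (S.map' 0 1) (kernel.condition _) :=
      { τ₁ := p, τ₂ := 𝟙 _, τ₃ := 𝟙 _ }
    have hφ := (ShortComplex.exact_iff_of_epi_of_isIso_of_mono φ).2 (ShortComplex.exact_kernel _)
    exact ComposableArrows.exact_of_δ₀ hφ.exact_toComposableArrows hS.exact
  epi := hS.epi
  prop
    | 0, _ => hY
    | i + 1, _ => hS.prop i (by omega)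
  nonempty_iso := hS.nonempty_iso

lemma exists_extend {X : C} {k n l : ℕ} {S : ComposableArrows C (k + 1)}
    (hS : IsPresentation P X S) (hker : HasPartialResolution P n (kernel (S.map' 0 1)))
    (hl : k + n = l) : ∃ S' : ComposableArrows C (l + 1), IsPresentation P X S' := by
  induction n generalizing k with
  | zero =>
    subst hl
    exact ⟨S, hS⟩
  | succ n ih =>
    obtain ⟨Y, p, _, hY, hp⟩ := hker
    let e : kernel (p ≫ kernel.ι (S.map' 0 1)) ≅ kernel p := kernelCompMono p _
    exact ih (hS.precomp p hY) ((HasPartialResolution P n).prop_of_iso e.symm hp) (by omega)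

end IsPresentation

lemma HasPartialResolution.exists_isPresentation {n : ℕ} {X : C}
    (hX : HasPartialResolution P (n + 1) X) :
    ∃ S : ComposableArrows C (n + 1), IsPresentation P X S := by
  obtain ⟨Y, p, _, hY, hp⟩ := hX
  exact (IsPresentation.mk₁ p hY).exists_extend hp n.zero_add

end PartialResolution

section ExtVanishing

variable {C : Type*} [Category* C] [Abelian C] [HasDerivedCategory C] (G : C)

instance : ObjectProperty.IsClosedUnderIsomorphisms (· ∈ YSet G) where
  of_iso {X X'} e hX k hk f := by
    let φ := ((DerivedCategory.singleFunctor C 0).map e.inv)⟦k⟧'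
    rw [← cancel_mono φ, hX k hk (f ≫ φ), zero_comp]

instance : ObjectProperty.IsClosedUnderExtensions (· ∈ YSet G) where
  prop_X₂_of_shortExact hS hX₁ hX₃ k hk f := by
    have hexact := (preadditiveCoyoneda.obj (.op ((DerivedCategory.singleFunctor C 0).obj G)))
      |>.homologySequence_exact₂ _ hS.singleTriangle_distinguished k
    rw [ShortComplex.ab_exact_iff] at hexact
    obtain ⟨x, rfl⟩ := hexact f (hX₃ k hk _)
    rw [show x = 0 from hX₁ k hk x]
    exact map_zero _

variable {G}

lemma mem_YSet_X₁_of_shortExact {S : ShortComplex C} (hS : S.ShortExact) (hX₂ : S.X₂ ∈ YSet G)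
    (hX₃ : S.X₃ ∈ YSet G) (hlift : ∀ f : G ⟶ S.X₃, ∃ g : G ⟶ S.X₂, g ≫ S.g = f) :
    S.X₁ ∈ YSet G := by
  intro k hk f
  have htri := hS.singleTriangle_distinguished
  obtain rfl | hk' : k = 1 ∨ 1 < k := by omega
  · obtain ⟨δ, rfl⟩ : ∃ δ, f = δ ≫ hS.singleδ :=
      Triangle.coyoneda_exact₁ _ htri f (hX₂ 1 hk _)
    obtain ⟨h, rfl⟩ := (DerivedCategory.singleFunctor C 0).map_surjective δ
    obtain ⟨g, rfl⟩ := hlift h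
    have hzero : (DerivedCategory.singleFunctor C 0).map S.g ≫ hS.singleδ = 0 :=
      comp_distTriang_mor_zero₂₃ _ htri
    rw [Functor.map_comp, Category.assoc, hzero, comp_zero]
  · have hexact := (preadditiveCoyoneda.obj (.op ((DerivedCategory.singleFunctor C 0).obj G)))
      |>.homologySequence_exact₁ _ htri (k - 1) k (by omega)
    rw [ShortComplex.ab_exact_iff] at hexact
    obtain ⟨x, rfl⟩ := hexact f (hX₂ k hk _)
    rw [show x = 0 from hX₃ (k - 1) (by omega) x]
    exact map_zero _

end ExtVanishing

section Precover

variable {C : Type u} [Category.{v} C] [HasCoproducts.{v} C]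

/-- The canonical `Sum(G)`-precover `∐_{G ⟶ X} G ⟶ X` of `X`. -/
noncomputable abbrev canonicalPrecover (G X : C) : (∐ fun _ : G ⟶ X => G) ⟶ X :=
  Sigma.desc id

lemma exists_comp_canonicalPrecover_eq {G X : C} (f : G ⟶ X) :
    ∃ g, g ≫ canonicalPrecover G X = f :=
  ⟨Sigma.ι (fun _ : G ⟶ X => G) f, by simp⟩

lemma epi_canonicalPrecover {G Z X : C} (hZ : Z ∈ sumT G) (q : Z ⟶ X) [Epi q] :
    Epi (canonicalPrecover G X) := by
  obtain ⟨I, ⟨e⟩⟩ := hZ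
  let q' : (∐ fun _ : I => G) ⟶ X := e.inv ≫ q
  let h : (∐ fun _ : I => G) ⟶ ∐ fun _ : G ⟶ X => G :=
    Sigma.desc fun i => Sigma.ι (fun _ : G ⟶ X => G) (Sigma.ι (fun _ : I => G) i ≫ q')
  have hfac : h ≫ canonicalPrecover G X = q' := by ext; simp [h]
  exact epi_of_epi_fac hfac

instance (G : C) : ObjectProperty.IsClosedUnderIsomorphisms (· ∈ sumT G) where
  of_iso := fun e ⟨I, ⟨e'⟩⟩ => ⟨I, ⟨e.symm ≪≫ e'⟩⟩

instance [HasZeroMorphisms C] (G : C) : ObjectProperty.ContainsZero (· ∈ sumT G) where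
  exists_zero := ⟨∐ fun _ : PEmpty => G,
    (IsZero.iff_id_eq_zero _).2 (Sigma.hom_ext _ _ fun i => i.elim), PEmpty, ⟨Iso.refl _⟩⟩

end Precover

section PresSet

variable {C : Type u} [Category.{v} C] [Abelian C] [HasCoproducts.{v} C] {G : C}

lemma HasPartialResolution.mem_presSet {n : ℕ} {X : C}
    (hX : HasPartialResolution (· ∈ sumT G) (n + 1) X) : X ∈ presSet G n := by
  obtain ⟨S, hS⟩ := hX.exists_isPresentation
  exact ⟨S, hS.exact, hS.epi, hS.prop, hS.nonempty_iso⟩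

lemma sumT_subset_presSet (G : C) (n : ℕ) : sumT G ⊆ presSet G n :=
  fun _ hX => (HasPartialResolution.of_prop hX (n + 1)).mem_presSet

lemma epi_canonicalPrecover_of_mem_presSet {n : ℕ} {X : C} (hX : X ∈ presSet G n) :
    Epi (canonicalPrecover G X) := by
  obtain ⟨S, -, _, hsum, ⟨e⟩⟩ := hX
  exact epi_canonicalPrecover (hsum n le_rfl) (S.map' n (n + 1) ≫ e.hom)

variable [HasDerivedCategory.{w} C]

lemma exists_epi_sumT_of_mem_YSet {m : ℕ} (hpres : presSet G m = YSet G) {Y : C}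
    (hY : Y ∈ YSet G) : ∃ (X : C) (q : X ⟶ Y), Epi q ∧ X ∈ sumT G ∧ kernel q ∈ YSet G := by
  have hepi : Epi (canonicalPrecover G Y) := epi_canonicalPrecover_of_mem_presSet (hpres ▸ hY)
  have hsum : (∐ fun _ : G ⟶ Y => G) ∈ sumT G := ⟨_, ⟨Iso.refl _⟩⟩
  have hker := mem_YSet_X₁_of_shortExact
    (.mk' (ShortComplex.exact_kernel (canonicalPrecover G Y)) inferInstance hepi)
    (hpres ▸ sumT_subset_presSet G m hsum) hY exists_comp_canonicalPrecover_eq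
  exact ⟨_, canonicalPrecover G Y, hepi, hsum, hker⟩

theorem stmt14_general {m : ℕ} (hpres : presSet G m = YSet G) {S : ComposableArrows C m}
    (hS : S.Exact) (hY : ∀ (i : ℕ) (hi : i ≤ m), S.obj' i ∈ YSet G) :
    cokernel (S.map' (m - 1) m m.pred_le) ∈ YSet G := by
  have hcoker : HasPartialResolution (· ∈ YSet G) (m + 1) (cokernel (S.map' (m - 1) m m.pred_le)) :=
    .cokernel_of_exact hS hY
  rw [← hpres]
  exact (hcoker.of_epi_covers fun _ => exists_epi_sumT_of_mem_YSet hpres).mem_presSet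

end PresSet

/-- Let `A` be an AB3 abelian category (whose derived category has Hom sets and coproducts)
and let `T` be an object such that coproducts of copies of `T` agree in `A` and `D(A)` and
`Ext^k_A(T, T^{(I)}) = 0` for all `k > 0` and all sets `I`.  If `Pres^m(T) = Y`, where
`Y = ⋂_{k>0} Ker(Ext^k_A(T, ?))`, then `Pres^m(Y) ⊆ Y`: for every exact sequence
`Y^0 → Y^1 → ⋯ → Y^m` with all `Y^j ∈ Y`, the cokernel of the last map lies in `Y`. -/
theorem stmt14
    (hsame : ∀ I : Type v, IsIso (Sigma.desc
      (fun i : I => (DerivedCategory.singleFunctor A 0).map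
        (Sigma.ι (fun _ : I => T) i))))
    (hext : ∀ (k : ℤ), 0 < k → ∀ I : Type v,
      ∀ f : (DerivedCategory.singleFunctor A 0).obj T ⟶
        ((DerivedCategory.singleFunctor A 0).obj (∐ (fun _ : I => T)))⟦k⟧, f = 0)
    (m : ℕ) (hpres : presSet T m = YSet T) :
    ∀ S : ComposableArrows A m, S.Exact → (∀ (i : ℕ) (hi : i ≤ m), S.obj' i ∈ YSet T) →
      cokernel (S.map' (m - 1) m) ∈ YSet T := by
  exact fun _ hS hY => stmt14_general hpres hS hY
end

section
/- Let E be a ring, A an abelian (or dg) setting with a triangulated functor ?⊗^L_E T : D(E) → D(A) preserving coproducts and products, and let C• be a cochain complex of E-modules such that C^k[0] ⊗^L_E T = 0 in D(A) for every k ∈ ℤ. Then C• ⊗^L_E T = 0 in D(A). -/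
open CategoryTheory CategoryTheory.Limits

universe s w v u

/-!
Compare `C•` with its brutal truncations `σ_{≥ n} C•` and `σ_{< n} C•`. Consecutive truncations
differ by a shifted stalk complex, so the functor `F = ? ⊗^L T` turns the transition maps between
them into isomorphisms. Let `s` be the endomorphism of the product of the `σ_{≥ m + n} C•`, `n ∈ ℕ`,
induced by the transition maps. In each degree this tower is eventually zero, hence `s` is nilpotent
there, and `1 - s` is an isomorphism of complexes. As `F` preserves the product, `1 - F(s)` is an
isomorphism too; but it kills the diagonal map from `F(σ_{≥ m} C•)` given by the inverses of the
transition maps, which is a split monomorphism. Hence `F(σ_{≥ m} C•) = 0`, and dually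
`F(σ_{< m} C•) = 0` using coproducts. This requires products and coproducts of complexes to be
products and coproducts in the derived category, which is the case when they are exact.
-/

instance isStableUnderLimitsOfShape_isomorphisms {J C : Type*} [Category* J] [Category* C] :
    (MorphismProperty.isomorphisms C).IsStableUnderLimitsOfShape J where
  condition K L cK cL hK hL f (_ : ∀ j, IsIso (f.app j)) φ hφ := by
    have := NatIso.isIso_of_isIso_app f
    obtain rfl : φ = (hK.conePointsIsoOfNatIso hL (asIso f)).hom := hL.hom_ext fun j => by simp [hφ]
    exact Iso.isIso_hom _

section Homology

variable {J C : Type*} [Category* J] [Category* C] [Abelian C]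

/-- The homology of a diagram of short complexes, computed in the abelian category `J ⥤ C`, is the
diagram of the homologies. -/
noncomputable def homologyFunctorEquivalenceInverseIso (K : J ⥤ ShortComplex C) :
    ((ShortComplex.FunctorEquivalence.inverse J C).obj K).homology ≅
      K ⋙ ShortComplex.homologyFunctor C :=
  letI S := (ShortComplex.FunctorEquivalence.inverse J C).obj K
  NatIso.ofComponents (fun j => (S.mapHomologyIso ((evaluation J C).obj j)).symm) fun {i j} f => by
    have naturality := NatTrans.app_homology ((evaluation J C).map f) S
    rw [evaluation_map_app] at naturality
    rw [naturality]
    change (_ ≫ _ ≫ _) ≫ _ = _ ≫ _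
    rw [Category.assoc, Category.assoc]
    exact congrArg _ ((congrArg _ (Iso.hom_inv_id _)).trans (Category.comp_id _))

lemma preservesLimitsOfShape_shortComplexHomologyFunctor
    [HasLimitsOfShape J C] [HasExactLimitsOfShape J C] :
    PreservesLimitsOfShape J (ShortComplex.homologyFunctor C) where
  preservesLimit {K} := by
    let S := (ShortComplex.FunctorEquivalence.inverse J C).obj K
    refine preservesLimit_of_preserves_limit_cone (ShortComplex.isLimitLimitCone K)
      (IsLimit.ofIsoLimit
        ((IsLimit.postcomposeHomEquiv (homologyFunctorEquivalenceInverseIso K) _).symm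
          (limit.isLimit S.homology))
        (Cone.ext (S.mapHomologyIso lim).symm fun j => ?_))
    change limit.π S.homology j ≫ (S.mapHomologyIso ((evaluation J C).obj j)).inv =
      (S.mapHomologyIso lim).inv ≫ ShortComplex.homologyMap (S.mapNatTrans (lim.π j))
    rw [Iso.comp_inv_eq, Category.assoc]
    exact NatTrans.app_homology (lim.π j) S

lemma preservesColimitsOfShape_shortComplexHomologyFunctor
    [HasColimitsOfShape J C] [HasExactColimitsOfShape J C] :
    PreservesColimitsOfShape J (ShortComplex.homologyFunctor C) where
  preservesColimit {K} := by
    let S := (ShortComplex.FunctorEquivalence.inverse J C).obj K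
    refine preservesColimit_of_preserves_colimit_cocone (ShortComplex.isColimitColimitCocone K)
      (IsColimit.ofIsoColimit
        ((IsColimit.precomposeHomEquiv (homologyFunctorEquivalenceInverseIso K).symm _).symm
          (colimit.isColimit S.homology))
        (Cocone.ext (S.mapHomologyIso colim).symm fun j => ?_))
    change ((S.mapHomologyIso ((evaluation J C).obj j)).hom ≫ colimit.ι S.homology j) ≫
      (S.mapHomologyIso colim).inv = ShortComplex.homologyMap (S.mapNatTrans (colim.ι j))
    rw [Iso.comp_inv_eq, ← Iso.eq_inv_comp]
    exact NatTrans.app_homology (colim.ι j) S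

variable {ι : Type*} (c : ComplexShape ι)

instance preservesLimitsOfShape_homologyFunctor
    [HasLimitsOfShape J C] [HasExactLimitsOfShape J C] (n : ι) :
    PreservesLimitsOfShape J (HomologicalComplex.homologyFunctor C c n) :=
  have : PreservesLimitsOfShape J (HomologicalComplex.shortComplexFunctor C c n) :=
    ⟨⟨fun hs => ⟨ShortComplex.isLimitOfIsLimitπ _
      (isLimitOfPreserves (HomologicalComplex.eval C c _) hs)
      (isLimitOfPreserves (HomologicalComplex.eval C c _) hs)
      (isLimitOfPreserves (HomologicalComplex.eval C c _) hs)⟩⟩⟩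
  have := preservesLimitsOfShape_shortComplexHomologyFunctor (J := J) (C := C)
  preservesLimitsOfShape_of_natIso (HomologicalComplex.homologyFunctorIso C c n).symm

instance preservesColimitsOfShape_homologyFunctor
    [HasColimitsOfShape J C] [HasExactColimitsOfShape J C] (n : ι) :
    PreservesColimitsOfShape J (HomologicalComplex.homologyFunctor C c n) :=
  have : PreservesColimitsOfShape J (HomologicalComplex.shortComplexFunctor C c n) :=
    ⟨⟨fun hs => ⟨ShortComplex.isColimitOfIsColimitπ _
      (isColimitOfPreserves (HomologicalComplex.eval C c _) hs)
      (isColimitOfPreserves (HomologicalComplex.eval C c _) hs)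
      (isColimitOfPreserves (HomologicalComplex.eval C c _) hs)⟩⟩⟩
  have := preservesColimitsOfShape_shortComplexHomologyFunctor (J := J) (C := C)
  preservesColimitsOfShape_of_natIso (HomologicalComplex.homologyFunctorIso C c n).symm

instance isStableUnderLimitsOfShape_quasiIso
    [HasLimitsOfShape J C] [HasExactLimitsOfShape J C] :
    (HomologicalComplex.quasiIso C c).IsStableUnderLimitsOfShape J where
  condition K L cK cL hK hL f hf φ hφ := by
    rw [HomologicalComplex.mem_quasiIso_iff, quasiIso_iff]
    intro n
    let H := HomologicalComplex.homologyFunctor C c n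
    rw [quasiIsoAt_iff_isIso_homologyMap]
    refine MorphismProperty.IsStableUnderLimitsOfShape.condition
      (W := MorphismProperty.isomorphisms C) _ _ _ _
      (isLimitOfPreserves H hK) (isLimitOfPreserves H hL) (Functor.whiskerRight f H)
      (fun j => ?_) _ (fun j => ?_)
    · have := (HomologicalComplex.mem_quasiIso_iff _).1 (hf j)
      exact inferInstanceAs (IsIso (HomologicalComplex.homologyMap (f.app j) n))
    · exact (H.map_comp _ _).symm.trans ((H.congr_map (hφ j)).trans (H.map_comp _ _))

instance isStableUnderColimitsOfShape_quasiIso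
    [HasColimitsOfShape J C] [HasExactColimitsOfShape J C] :
    (HomologicalComplex.quasiIso C c).IsStableUnderColimitsOfShape J where
  condition K L cK cL hK hL f hf φ hφ := by
    rw [HomologicalComplex.mem_quasiIso_iff, quasiIso_iff]
    intro n
    let H := HomologicalComplex.homologyFunctor C c n
    rw [quasiIsoAt_iff_isIso_homologyMap]
    refine MorphismProperty.IsStableUnderColimitsOfShape.condition
      (W := MorphismProperty.isomorphisms C) _ _ _ _
      (isColimitOfPreserves H hK) (isColimitOfPreserves H hL) (Functor.whiskerRight f H)
      (fun j => ?_) _ (fun j => ?_)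
    · have := (HomologicalComplex.mem_quasiIso_iff _).1 (hf j)
      exact inferInstanceAs (IsIso (HomologicalComplex.homologyMap (f.app j) n))
    · exact (H.map_comp _ _).symm.trans ((H.congr_map (hφ j)).trans (H.map_comp _ _))

end Homology

section WeakProducts

open Pretriangulated

variable {D : Type*} [Category* D] [Preadditive D] [HasZeroObject D] [HasShift D ℤ]
  [∀ n : ℤ, (shiftFunctor D n).Additive] [Pretriangulated D] {J : Type*} {X : J → D}

lemma nonempty_isLimit_of_exists_lift (P : Fan X)
    (exists_lift : ∀ {Y : D} (f : ∀ j, Y ⟶ X j), ∃ g : Y ⟶ P.pt, ∀ j, g ≫ P.proj j = f j)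
    (mono_endo : ∀ e : P.pt ⟶ P.pt, (∀ j, e ≫ P.proj j = P.proj j) → Mono e) :
    Nonempty (IsLimit P) := by
  have eq_zero {Y : D} (f : Y ⟶ P.pt) (hf : ∀ j, f ≫ P.proj j = 0) : f = 0 := by
    obtain ⟨W, g, δ, hT⟩ := distinguished_cocone_triangle f
    choose (u : ∀ j, W ⟶ X j) (hu : ∀ j, P.proj j = g ≫ u j) using
      fun j => Triangle.yoneda_exact₂ _ hT (P.proj j) (hf j)
    obtain ⟨e, he⟩ := exists_lift u
    have := mono_endo (g ≫ e) fun j => by rw [Category.assoc, he, hu]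
    have hfg : f ≫ g = 0 := comp_distTriang_mor_zero₁₂ _ hT
    rw [← cancel_mono (g ≫ e), reassoc_of% hfg, zero_comp, zero_comp]
  choose lift lift_proj using fun s : Fan X => exists_lift s.proj
  refine ⟨Fan.IsLimit.mk _ lift lift_proj fun s m hm => sub_eq_zero.1 (eq_zero _ fun j => ?_)⟩
  rw [Preadditive.sub_comp, lift_proj, hm, sub_self]

lemma nonempty_isColimit_of_exists_desc (P : Cofan X)
    (exists_desc : ∀ {Y : D} (f : ∀ j, X j ⟶ Y), ∃ g : P.pt ⟶ Y, ∀ j, P.inj j ≫ g = f j)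
    (epi_endo : ∀ e : P.pt ⟶ P.pt, (∀ j, P.inj j ≫ e = P.inj j) → Epi e) :
    Nonempty (IsColimit P) := by
  have eq_zero {Y : D} (f : P.pt ⟶ Y) (hf : ∀ j, P.inj j ≫ f = 0) : f = 0 := by
    obtain ⟨W, g, δ, hT⟩ := distinguished_cocone_triangle₁ f
    choose (u : ∀ j, X j ⟶ W) (hu : ∀ j, P.inj j = u j ≫ g) using
      fun j => Triangle.coyoneda_exact₂ _ hT (P.inj j) (hf j)
    obtain ⟨e, he⟩ := exists_desc u
    have := epi_endo (e ≫ g) fun j => by rw [reassoc_of% he, hu]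
    have hgf : g ≫ f = 0 := comp_distTriang_mor_zero₁₂ _ hT
    rw [← cancel_epi (e ≫ g), Category.assoc, hgf, comp_zero, comp_zero]
  choose desc inj_desc using fun s : Cofan X => exists_desc s.inj
  refine ⟨Cofan.IsColimit.mk _ desc inj_desc fun s m hm => sub_eq_zero.1 (eq_zero _ fun j => ?_)⟩
  rw [Preadditive.comp_sub, inj_desc, hm, sub_self]

end WeakProducts

section DerivedCategory

open DerivedCategory

variable {C : Type u} [Category.{v} C] [Abelian C] [HasDerivedCategory.{w} C] {J : Type s}

section Products

variable [HasLimitsOfShape (Discrete J) C] [HasExactLimitsOfShape (Discrete J) C]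
  (X : J → CochainComplex C ℤ)

lemma exists_lift_Q_piObj {Y : DerivedCategory C} (f : ∀ j, Y ⟶ Q.obj (X j)) :
    ∃ g : Y ⟶ Q.obj (∏ᶜ X), ∀ j, g ≫ Q.map (Pi.π X j) = f j := by
  let e := Q.objObjPreimageIso Y
  choose X' a t ht fac using fun j => left_fac (e.hom ≫ f j)
  have : IsIso (Q.map (Limits.Pi.map t)) := (isIso_Q_map_iff_quasiIso C _).2 <|
    (HomologicalComplex.quasiIso C (ComplexShape.up ℤ)).limMap _
      fun j => (isIso_Q_map_iff_quasiIso C _).1 (ht j.as)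
  refine ⟨e.inv ≫ Q.map (Pi.lift a) ≫ inv (Q.map (Limits.Pi.map t)), fun j => ?_⟩
  have inv_comp_π : inv (Q.map (Limits.Pi.map t)) ≫ Q.map (Pi.π X j) =
      Q.map (Pi.π X' j) ≫ inv (Q.map (t j)) := by
    rw [IsIso.inv_comp_eq, ← Category.assoc, IsIso.eq_comp_inv, ← Q.map_comp, ← Q.map_comp,
      Pi.map_π]
  rw [Category.assoc, Category.assoc, inv_comp_π, ← Q.map_comp_assoc, Pi.lift_π, ← fac,
    e.inv_hom_id_assoc]

lemma isIso_of_comp_Q_map_π (e : Q.obj (∏ᶜ X) ⟶ Q.obj (∏ᶜ X))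
    (he : ∀ j, e ≫ Q.map (Pi.π X j) = Q.map (Pi.π X j)) : IsIso e := by
  refine (isIso_iff C _).2 fun n => ?_
  let H := DerivedCategory.homologyFunctor C n
  have : PreservesLimitsOfShape (Discrete J) (Q ⋙ H) :=
    preservesLimitsOfShape_of_natIso (homologyFunctorFactors C n).symm
  have map_e : H.map e = 𝟙 _ := by
    refine Fan.IsLimit.hom_ext (isLimitOfHasProductOfPreservesLimit (Q ⋙ H) X) _ _ fun j => ?_
    exact (H.map_comp _ _).symm.trans ((H.congr_map (he j)).trans (Category.id_comp _).symm)
  rw [map_e]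
  infer_instance

instance preservesLimitsOfShape_discrete_Q :
    PreservesLimitsOfShape (Discrete J) (Q : CochainComplex C ℤ ⥤ DerivedCategory C) :=
  have (X : J → CochainComplex C ℤ) : PreservesLimit (Discrete.functor X) Q := by
    obtain ⟨h⟩ := nonempty_isLimit_of_exists_lift (Fan.mk _ fun j => Q.map (Pi.π X j))
      (exists_lift_Q_piObj X)
      (fun e he => have := isIso_of_comp_Q_map_π X e he; inferInstance)
    exact preservesLimit_of_preserves_limit_cone (productIsProduct X)
      ((isLimitMapConeFanMkEquiv _ _ _).symm h)
  preservesLimitsOfShape_of_discrete _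

end Products

section Coproducts

variable [HasColimitsOfShape (Discrete J) C] [HasExactColimitsOfShape (Discrete J) C]
  (X : J → CochainComplex C ℤ)

lemma exists_desc_Q_sigmaObj {Y : DerivedCategory C} (f : ∀ j, Q.obj (X j) ⟶ Y) :
    ∃ g : Q.obj (∐ X) ⟶ Y, ∀ j, Q.map (Sigma.ι X j) ≫ g = f j := by
  let e := Q.objObjPreimageIso Y
  choose X' t ht a fac using fun j => right_fac (f j ≫ e.inv)
  have : IsIso (Q.map (Limits.Sigma.map t)) := (isIso_Q_map_iff_quasiIso C _).2 <|
    (HomologicalComplex.quasiIso C (ComplexShape.up ℤ)).colimMap _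
      fun j => (isIso_Q_map_iff_quasiIso C _).1 (ht j.as)
  refine ⟨inv (Q.map (Limits.Sigma.map t)) ≫ Q.map (Sigma.desc a) ≫ e.hom, fun j => ?_⟩
  have ι_comp_inv : Q.map (Sigma.ι X j) ≫ inv (Q.map (Limits.Sigma.map t)) =
      inv (Q.map (t j)) ≫ Q.map (Sigma.ι X' j) := by
    rw [IsIso.eq_inv_comp, ← Category.assoc, IsIso.comp_inv_eq, ← Q.map_comp, ← Q.map_comp,
      Sigma.ι_map]
  rw [reassoc_of% ι_comp_inv, ← Q.map_comp_assoc, Sigma.ι_desc, ← Category.assoc, ← fac,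
    Category.assoc, e.inv_hom_id, Category.comp_id]

lemma isIso_of_Q_map_ι_comp (e : Q.obj (∐ X) ⟶ Q.obj (∐ X))
    (he : ∀ j, Q.map (Sigma.ι X j) ≫ e = Q.map (Sigma.ι X j)) : IsIso e := by
  refine (isIso_iff C _).2 fun n => ?_
  let H := DerivedCategory.homologyFunctor C n
  have : PreservesColimitsOfShape (Discrete J) (Q ⋙ H) :=
    preservesColimitsOfShape_of_natIso (homologyFunctorFactors C n).symm
  have map_e : H.map e = 𝟙 _ := by
    refine Cofan.IsColimit.hom_ext (isColimitOfHasCoproductOfPreservesColimit (Q ⋙ H) X) _ _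
      fun j => ?_
    exact (H.map_comp _ _).symm.trans ((H.congr_map (he j)).trans (Category.comp_id _).symm)
  rw [map_e]
  infer_instance

instance preservesColimitsOfShape_discrete_Q :
    PreservesColimitsOfShape (Discrete J) (Q : CochainComplex C ℤ ⥤ DerivedCategory C) :=
  have (X : J → CochainComplex C ℤ) : PreservesColimit (Discrete.functor X) Q := by
    obtain ⟨h⟩ := nonempty_isColimit_of_exists_desc (Cofan.mk _ fun j => Q.map (Sigma.ι X j))
      (exists_desc_Q_sigmaObj X)
      (fun e he => have := isIso_of_Q_map_ι_comp X e he; inferInstance)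
    exact preservesColimit_of_preserves_colimit_cocone (coproductIsCoproduct X)
      ((isColimitMapCoconeCofanMkEquiv _ _ _).symm h)
  preservesColimitsOfShape_of_discrete _

end Coproducts

end DerivedCategory

section Swindle

section Products

section Fan

variable {C : Type*} [Category* C] [Preadditive C] {Y : ℕ → C} {a : ∀ n, Y (n + 1) ⟶ Y n}
  {P : Fan Y} {σ : P.pt ⟶ P.pt}

lemma isIso_id_sub_of_isLimit (hP : IsLimit P)
    (hσ : ∀ n, σ ≫ P.proj n = P.proj (n + 1) ≫ a n)
    {N : ℕ} (hN : ∀ n, N ≤ n → IsZero (Y n)) : IsIso (𝟙 P.pt - σ) := by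
  have pow_comp_proj (r n : ℕ) (h : N ≤ n + r) :
      (End.of σ ^ r).asHom ≫ P.proj n = 0 := by
    induction r generalizing n with
    | zero => exact (hN n h).eq_of_tgt _ _
    | succ r ih =>
      rw [pow_succ', End.mul_def, Category.assoc, hσ, reassoc_of% ih (n + 1) (by omega), zero_comp]
  have : IsNilpotent (End.of σ) := ⟨N, Fan.IsLimit.hom_ext hP _ _ fun n => by
    rw [pow_comp_proj N n (by omega)]; exact zero_comp.symm⟩
  exact (isUnit_iff_isIso _).1 this.isUnit_one_sub

lemma isZero_of_mono_id_sub [∀ n, IsIso (a n)] (hP : IsLimit P)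
    (hσ : ∀ n, σ ≫ P.proj n = P.proj (n + 1) ≫ a n) (_ : Mono (𝟙 P.pt - σ)) : IsZero (Y 0) := by
  let c : ∀ n, Y 0 ⟶ Y n := Nat.rec (𝟙 _) fun n ih => ih ≫ inv (a n)
  have c_succ (n : ℕ) : c (n + 1) ≫ a n = c n := (IsIso.eq_comp_inv (a n)).1 rfl
  let δ : Y 0 ⟶ P.pt := Fan.IsLimit.lift hP c
  have δ_proj (n : ℕ) : δ ≫ P.proj n = c n := Fan.IsLimit.fac hP _ n
  have δ_comp : δ ≫ σ = δ := Fan.IsLimit.hom_ext hP _ _ fun n => by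
    rw [Category.assoc, hσ, reassoc_of% δ_proj, δ_proj, c_succ]
  have δ_eq_zero : δ = 0 := by
    rw [← cancel_mono (𝟙 P.pt - σ), Preadditive.comp_sub, δ_comp, Category.comp_id, sub_self,
      zero_comp]
  exact (IsZero.iff_id_eq_zero _).2 ((δ_proj 0).symm.trans (by rw [δ_eq_zero, zero_comp]))

end Fan

variable {C D ι : Type*} [Category* C] [Preadditive C] [HasProductsOfShape ℕ C]
  [Category* D] [Preadditive D] {c : ComplexShape ι}

lemma isZero_obj_zero_of_inverse_tower (G : HomologicalComplex C c ⥤ D) [G.Additive]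
    [PreservesLimitsOfShape (Discrete ℕ) G] {X : ℕ → HomologicalComplex C c}
    (a : ∀ n, X (n + 1) ⟶ X n) (hX : ∀ i, ∃ N, ∀ n, N ≤ n → IsZero ((X n).X i))
    [∀ n, IsIso (G.map (a n))] : IsZero (G.obj (X 0)) := by
  let σ : ∏ᶜ X ⟶ ∏ᶜ X := Pi.lift fun n => Pi.π X (n + 1) ≫ a n
  have σ_π (n : ℕ) : σ ≫ Pi.π X n = Pi.π X (n + 1) ≫ a n := Pi.lift_π _ _
  have (i : ι) : IsIso ((𝟙 (∏ᶜ X) - σ).f i) := by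
    obtain ⟨N, hN⟩ := hX i
    exact isIso_id_sub_of_isLimit
      (isLimitOfHasProductOfPreservesLimit (HomologicalComplex.eval C c i) X)
      (fun n => HomologicalComplex.congr_hom (σ_π n) i) hN
  have : IsIso (𝟙 (∏ᶜ X) - σ) := HomologicalComplex.Hom.isIso_of_components _
  have mono_id_sub : Mono (𝟙 (G.obj (∏ᶜ X)) - G.map σ) := by
    rw [← G.map_id, ← G.map_sub]
    infer_instance
  refine isZero_of_mono_id_sub (σ := G.map σ) (a := fun n => G.map (a n))
    (isLimitOfHasProductOfPreservesLimit G X) (fun n => ?_) mono_id_sub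
  exact (G.map_comp _ _).symm.trans ((G.congr_map (σ_π n)).trans (G.map_comp _ _))

end Products

section Coproducts

section Cofan

variable {C : Type*} [Category* C] [Preadditive C] {Y : ℕ → C} {a : ∀ n, Y n ⟶ Y (n + 1)}
  {P : Cofan Y} {σ : P.pt ⟶ P.pt}

lemma isIso_id_sub_of_isColimit (hP : IsColimit P)
    (hσ : ∀ n, P.inj n ≫ σ = a n ≫ P.inj (n + 1))
    {N : ℕ} (hN : ∀ n, N ≤ n → IsZero (Y n)) : IsIso (𝟙 P.pt - σ) := by
  have inj_comp_pow (r n : ℕ) (h : N ≤ n + r) :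
      P.inj n ≫ (End.of σ ^ r).asHom = 0 := by
    induction r generalizing n with
    | zero => exact (hN n h).eq_of_src _ _
    | succ r ih =>
      rw [pow_succ, End.mul_def, reassoc_of% hσ, ih (n + 1) (by omega), comp_zero]
  have : IsNilpotent (End.of σ) := ⟨N, Cofan.IsColimit.hom_ext hP _ _ fun n => by
    rw [inj_comp_pow N n (by omega)]; exact comp_zero.symm⟩
  exact (isUnit_iff_isIso _).1 this.isUnit_one_sub

lemma isZero_of_epi_id_sub [∀ n, IsIso (a n)] (hP : IsColimit P)
    (hσ : ∀ n, P.inj n ≫ σ = a n ≫ P.inj (n + 1)) (_ : Epi (𝟙 P.pt - σ)) : IsZero (Y 0) := by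
  let c : ∀ n, Y n ⟶ Y 0 := Nat.rec (𝟙 _) fun n ih => inv (a n) ≫ ih
  have c_succ (n : ℕ) : a n ≫ c (n + 1) = c n := (IsIso.eq_inv_comp (a n)).1 rfl
  let δ : P.pt ⟶ Y 0 := Cofan.IsColimit.desc hP c
  have inj_δ (n : ℕ) : P.inj n ≫ δ = c n := Cofan.IsColimit.fac hP _ n
  have comp_δ : σ ≫ δ = δ := Cofan.IsColimit.hom_ext hP _ _ fun n => by
    rw [reassoc_of% hσ, inj_δ, inj_δ, c_succ]
  have δ_eq_zero : δ = 0 := by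
    rw [← cancel_epi (𝟙 P.pt - σ), Preadditive.sub_comp, comp_δ, Category.id_comp, sub_self,
      comp_zero]
  exact (IsZero.iff_id_eq_zero _).2 ((inj_δ 0).symm.trans (by rw [δ_eq_zero, comp_zero]))

end Cofan

variable {C D ι : Type*} [Category* C] [Preadditive C] [HasCoproductsOfShape ℕ C]
  [Category* D] [Preadditive D] {c : ComplexShape ι}

lemma isZero_obj_zero_of_direct_tower (G : HomologicalComplex C c ⥤ D) [G.Additive]
    [PreservesColimitsOfShape (Discrete ℕ) G] {X : ℕ → HomologicalComplex C c}
    (a : ∀ n, X n ⟶ X (n + 1)) (hX : ∀ i, ∃ N, ∀ n, N ≤ n → IsZero ((X n).X i))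
    [∀ n, IsIso (G.map (a n))] : IsZero (G.obj (X 0)) := by
  let σ : ∐ X ⟶ ∐ X := Sigma.desc fun n => a n ≫ Sigma.ι X (n + 1)
  have ι_σ (n : ℕ) : Sigma.ι X n ≫ σ = a n ≫ Sigma.ι X (n + 1) := Sigma.ι_desc _ _
  have (i : ι) : IsIso ((𝟙 (∐ X) - σ).f i) := by
    obtain ⟨N, hN⟩ := hX i
    exact isIso_id_sub_of_isColimit
      (isColimitOfHasCoproductOfPreservesColimit (HomologicalComplex.eval C c i) X)
      (fun n => HomologicalComplex.congr_hom (ι_σ n) i) hN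
  have : IsIso (𝟙 (∐ X) - σ) := HomologicalComplex.Hom.isIso_of_components _
  have epi_id_sub : Epi (𝟙 (G.obj (∐ X)) - G.map σ) := by
    rw [← G.map_id, ← G.map_sub]
    infer_instance
  refine isZero_of_epi_id_sub (σ := G.map σ) (a := fun n => G.map (a n))
    (isColimitOfHasCoproductOfPreservesColimit G X) (fun n => ?_) epi_id_sub
  exact (G.map_comp _ _).symm.trans ((G.congr_map (ι_σ n)).trans (G.map_comp _ _))

end Coproducts

end Swindle

section BrutalTruncation

open ZeroObject

section HasZeroMorphisms

variable {C ι : Type*} [Category* C] [HasZeroMorphisms C] [HasZeroObject C] {c : ComplexShape ι}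
  (K : HomologicalComplex C c) (S T U : Set ι) (i : ι)

open Classical in
/-- The degree `i` component of the brutal truncation `brutalTrunc K S`. -/
noncomputable def brutalTruncX : C := if i ∈ S then K.X i else 0

variable {S i} in
lemma brutalTruncX_eq (h : i ∈ S) : brutalTruncX K S i = K.X i := if_pos h

variable {S i} in
lemma isZero_brutalTruncX (h : i ∉ S) : IsZero (brutalTruncX K S i) := by
  rw [brutalTruncX, if_neg h]
  exact isZero_zero C

open Classical in
/-- The inclusion of `brutalTruncX K S i` in `K.X i`: the identity if `i ∈ S`, and zero
otherwise. -/
noncomputable def brutalTruncXι : brutalTruncX K S i ⟶ K.X i :=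
  if h : i ∈ S then eqToHom (brutalTruncX_eq K h) else 0

open Classical in
/-- The projection of `K.X i` on `brutalTruncX K S i`: the identity if `i ∈ S`, and zero
otherwise. -/
noncomputable def brutalTruncXπ : K.X i ⟶ brutalTruncX K S i :=
  if h : i ∈ S then eqToHom (brutalTruncX_eq K h).symm else 0

variable {S i} in
lemma brutalTruncXι_eq_zero (h : i ∉ S) : brutalTruncXι K S i = 0 := dif_neg h

variable {S i} in
lemma brutalTruncXπ_eq_zero (h : i ∉ S) : brutalTruncXπ K S i = 0 := dif_neg h

variable {S i} in
lemma brutalTruncXπ_comp_ι (h : i ∈ S) : brutalTruncXπ K S i ≫ brutalTruncXι K S i = 𝟙 _ := by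
  rw [brutalTruncXι, brutalTruncXπ, dif_pos h, dif_pos h, eqToHom_trans, eqToHom_refl]

lemma brutalTruncXι_comp_π : brutalTruncXι K S i ≫ brutalTruncXπ K S i = 𝟙 _ := by
  by_cases h : i ∈ S
  · rw [brutalTruncXι, brutalTruncXπ, dif_pos h, dif_pos h, eqToHom_trans, eqToHom_refl]
  · exact (isZero_brutalTruncX K h).eq_of_src _ _

variable {S T i} in
lemma brutalTruncXι_comp_π_eq_zero (h : i ∈ S → i ∉ T) :
    brutalTruncXι K S i ≫ brutalTruncXπ K T i = 0 := by
  by_cases hS : i ∈ S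
  · rw [brutalTruncXπ_eq_zero K (h hS), comp_zero]
  · rw [brutalTruncXι_eq_zero K hS, zero_comp]

variable {S T i} in
lemma brutalTruncXι_comp_π_comp_ι (h : i ∈ S → i ∈ T) :
    brutalTruncXι K S i ≫ brutalTruncXπ K T i ≫ brutalTruncXι K T i = brutalTruncXι K S i := by
  by_cases hS : i ∈ S
  · rw [brutalTruncXπ_comp_ι K (h hS), Category.comp_id]
  · rw [brutalTruncXι_eq_zero K hS, zero_comp]

variable {S T i} in
lemma brutalTruncXι_comp_π_comp_ι_comp_π (h : i ∈ S → i ∈ T) :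
    (brutalTruncXι K S i ≫ brutalTruncXπ K T i) ≫ brutalTruncXι K T i ≫ brutalTruncXπ K S i =
      𝟙 _ := by
  rw [Category.assoc, reassoc_of% brutalTruncXι_comp_π_comp_ι K h, brutalTruncXι_comp_π]

/-- The brutal truncation of `K` to the degrees in `S`, with zero components elsewhere: for
`S = Set.Ici n` and `S = Set.Iic n` these are the complexes `σ_{≥ n} K` and `σ_{≤ n} K`. -/
noncomputable abbrev brutalTrunc : HomologicalComplex C c where
  X := brutalTruncX K S
  d i j := brutalTruncXι K S i ≫ K.d i j ≫ brutalTruncXπ K S j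
  shape i j hij := by rw [K.shape i j hij, zero_comp, comp_zero]
  d_comp_d' i j k _ _ := by
    by_cases h : j ∈ S
    · simp [reassoc_of% brutalTruncXπ_comp_ι K h]
    · simp [brutalTruncXπ_eq_zero K h]

variable {S T} in
/-- The comparison map between two brutal truncations of `K`: the identity in the degrees in
`S ∩ T`, and zero elsewhere. -/
@[simps]
noncomputable def brutalTruncMap (h : ∀ i j, c.Rel i j → i ∈ S → j ∈ T → (i ∈ T ↔ j ∈ S)) :
    brutalTrunc K S ⟶ brutalTrunc K T where
  f i := brutalTruncXι K S i ≫ brutalTruncXπ K T i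
  comm' i j hij := by
    by_cases hS : i ∈ S
    · by_cases hT : j ∈ T
      · by_cases hi : i ∈ T
        · simp [reassoc_of% brutalTruncXπ_comp_ι K hi,
            reassoc_of% brutalTruncXπ_comp_ι K ((h i j hij hS hT).1 hi)]
        · simp [brutalTruncXπ_eq_zero K hi,
            brutalTruncXπ_eq_zero K (mt (h i j hij hS hT).2 hi)]
      · simp [brutalTruncXπ_eq_zero K hT]
    · simp [brutalTruncXι_eq_zero K hS]

/-- Truncating to all degrees does nothing. -/
noncomputable def brutalTruncUnivIso : brutalTrunc K Set.univ ≅ K :=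
  HomologicalComplex.Hom.isoOfComponents
    (fun i => ⟨brutalTruncXι K _ i, brutalTruncXπ K _ i, brutalTruncXι_comp_π K _ i,
      brutalTruncXπ_comp_ι K (Set.mem_univ i)⟩)
    fun i j _ => by simp [brutalTruncXπ_comp_ι K (Set.mem_univ j)]

variable {i} in
lemma nonempty_brutalTrunc_singleton_iso_single [DecidableEq ι] (hi : ¬ c.Rel i i) :
    Nonempty (brutalTrunc K {i} ≅ (HomologicalComplex.single C c i).obj (K.X i)) := by
  let φ := HomologicalComplex.mkHomToSingle (K := brutalTrunc K {i}) (brutalTruncXι K {i} i)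
    fun j hj => by
      have hji : j ∉ ({i} : Set ι) := by
        rintro rfl
        exact hi hj
      dsimp only
      rw [brutalTruncXι_eq_zero K hji, zero_comp, zero_comp]
  have (j : ι) : IsIso (φ.f j) := by
    by_cases hj : j = i
    · subst hj
      have : IsIso (brutalTruncXι K {j} j) :=
        ⟨_, brutalTruncXι_comp_π K _ j, brutalTruncXπ_comp_ι K (Set.mem_singleton j)⟩
      rw [HomologicalComplex.mkHomToSingle_f]
      infer_instance
    · exact (isZero_brutalTruncX (S := {i}) K hj).isIso
        (HomologicalComplex.isZero_single_obj_X c i (K.X i) j hj) _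
  have := HomologicalComplex.Hom.isIso_of_components φ
  exact ⟨asIso φ⟩

variable {S T U}

/-- The sequence `0 ⟶ brutalTrunc K S ⟶ brutalTrunc K U ⟶ brutalTrunc K T ⟶ 0`, when `U` is the
disjoint union of `S` and `T`, and no differential goes from a degree in `S` to one in `T`. -/
noncomputable abbrev brutalTruncShortComplex (hU : S ∪ T = U) (hST : Disjoint S T)
    (hrel : ∀ i j, c.Rel i j → i ∈ S → j ∉ T) : ShortComplex (HomologicalComplex C c) where
  f := brutalTruncMap K (S := S) (T := U) (by grind)
  g := brutalTruncMap K (S := U) (T := T) (by grind)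
  zero := by
    ext i
    rw [HomologicalComplex.comp_f, brutalTruncMap_f, brutalTruncMap_f, Category.assoc,
      reassoc_of% brutalTruncXι_comp_π_comp_ι K (S := S) (T := U) (i := i) (by grind),
      brutalTruncXι_comp_π_eq_zero K (by grind),
      HomologicalComplex.zero_f]

end HasZeroMorphisms

variable {C ι : Type*} [Category* C] {c : ComplexShape ι} {S T U : Set ι}

lemma brutalTruncXπ_comp_ι_add [Preadditive C] [HasZeroObject C]
    (K : HomologicalComplex C c) (hU : S ∪ T = U) (hST : Disjoint S T) (i : ι) :
    brutalTruncXπ K S i ≫ brutalTruncXι K S i + brutalTruncXπ K T i ≫ brutalTruncXι K T i =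
      brutalTruncXπ K U i ≫ brutalTruncXι K U i := by
  by_cases hS : i ∈ S
  · have hT : i ∉ T := Set.disjoint_left.1 hST hS
    have hi : i ∈ U := hU ▸ Or.inl hS
    rw [brutalTruncXπ_comp_ι K hS, brutalTruncXπ_eq_zero K hT, zero_comp, add_zero,
      brutalTruncXπ_comp_ι K hi]
  · by_cases hT : i ∈ T
    · have hi : i ∈ U := hU ▸ Or.inr hT
      rw [brutalTruncXπ_comp_ι K hT, brutalTruncXπ_eq_zero K hS, zero_comp, zero_add,
        brutalTruncXπ_comp_ι K hi]
    · have hi : i ∉ U := by grind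
      rw [brutalTruncXπ_eq_zero K hS, brutalTruncXπ_eq_zero K hT, brutalTruncXπ_eq_zero K hi]
      simp

/-- In each degree, the components of `brutalTrunc K U` decompose as a direct sum. -/
noncomputable def brutalTruncSplitting [Preadditive C] [HasZeroObject C]
    (K : HomologicalComplex C c) (hU : S ∪ T = U) (hST : Disjoint S T)
    (hrel : ∀ i j, c.Rel i j → i ∈ S → j ∉ T) (i : ι) :
    ((brutalTruncShortComplex K hU hST hrel).map (HomologicalComplex.eval C c i)).Splitting where
  r := brutalTruncXι K U i ≫ brutalTruncXπ K S i
  s := brutalTruncXι K T i ≫ brutalTruncXπ K U i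
  f_r := brutalTruncXι_comp_π_comp_ι_comp_π K (by grind)
  s_g := brutalTruncXι_comp_π_comp_ι_comp_π K (by grind)
  id := by
    change (brutalTruncXι K U i ≫ brutalTruncXπ K S i) ≫ brutalTruncXι K S i ≫ brutalTruncXπ K U i +
      (brutalTruncXι K U i ≫ brutalTruncXπ K T i) ≫ brutalTruncXι K T i ≫ brutalTruncXπ K U i = 𝟙 _
    simpa [brutalTruncXι_comp_π, reassoc_of% brutalTruncXι_comp_π K] using
      brutalTruncXι K U i ≫= brutalTruncXπ_comp_ι_add K hU hST i =≫ brutalTruncXπ K U i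

lemma shortExact_brutalTruncShortComplex [Abelian C] (K : HomologicalComplex C c)
    (hU : S ∪ T = U) (hST : Disjoint S T) (hrel : ∀ i j, c.Rel i j → i ∈ S → j ∉ T) :
    (brutalTruncShortComplex K hU hST hrel).ShortExact :=
  HomologicalComplex.shortExact_of_degreewise_shortExact _ fun i =>
    (brutalTruncSplitting K hU hST hrel i).shortExact

end BrutalTruncation

section TriangulatedFunctor

open DerivedCategory Pretriangulated

variable {C : Type u} [Category.{v} C] [Abelian C] [HasDerivedCategory.{w} C]
  {D : Type*} [Category* D] [Preadditive D] [HasShift D ℤ] [∀ n : ℤ, (shiftFunctor D n).Additive]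
  (F : DerivedCategory C ⥤ D) [F.CommShift ℤ] {K : CochainComplex C ℤ}

lemma isZero_obj_singleFunctor_obj {M : C} (h : IsZero (F.obj ((singleFunctor C 0).obj M)))
    (n : ℤ) : IsZero (F.obj ((singleFunctor C n).obj M)) :=
  ((shiftFunctor D (-n)).map_isZero h).of_iso <|
    F.mapIso (((singleFunctors C).shiftIso (-n) n 0 (by omega)).app M).symm ≪≫
      (F.commShiftIso (-n)).app _

lemma isZero_obj_Q_obj_brutalTrunc_singleton {n : ℤ}
    (h : IsZero (F.obj ((singleFunctor C 0).obj (K.X n)))) :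
    IsZero (F.obj (Q.obj (brutalTrunc K {n}))) := by
  obtain ⟨e⟩ := nonempty_brutalTrunc_singleton_iso_single K (i := n) (by simp)
  exact (isZero_obj_singleFunctor_obj F h n).of_iso (F.mapIso (Q.mapIso e))

variable [HasZeroObject D] [Pretriangulated D] [F.IsTriangulated]

section ShortExact

variable {S : ShortComplex (CochainComplex C ℤ)}

lemma isIso_map_Q_map_f_of_isZero (hS : S.ShortExact) (h₃ : IsZero (F.obj (Q.obj S.X₃))) :
    IsIso (F.map (Q.map S.f)) :=
  (Triangle.isZero₃_iff_isIso₁ _ (F.map_distinguished _ (triangleOfSES_distinguished hS))).1 h₃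

lemma isIso_map_Q_map_g_of_isZero (hS : S.ShortExact) (h₁ : IsZero (F.obj (Q.obj S.X₁))) :
    IsIso (F.map (Q.map S.g)) :=
  (Triangle.isZero₁_iff_isIso₂ _ (F.map_distinguished _ (triangleOfSES_distinguished hS))).1 h₁

lemma isZero_obj_Q_obj_X₂ (hS : S.ShortExact) (h₁ : IsZero (F.obj (Q.obj S.X₁)))
    (h₃ : IsZero (F.obj (Q.obj S.X₃))) : IsZero (F.obj (Q.obj S.X₂)) :=
  Triangle.isZero₂_of_isZero₁₃ _ (F.map_distinguished _ (triangleOfSES_distinguished hS)) h₁ h₃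

end ShortExact

lemma isZero_obj_Q_obj_brutalTrunc_Ici [HasLimitsOfShape (Discrete ℕ) C]
    [HasExactLimitsOfShape (Discrete ℕ) C] [PreservesLimitsOfShape (Discrete ℕ) F]
    (hK : ∀ n, IsZero (F.obj ((singleFunctor C 0).obj (K.X n)))) (m : ℤ) :
    IsZero (F.obj (Q.obj (brutalTrunc K (Set.Ici m)))) := by
  let S (n : ℕ) := brutalTruncShortComplex K (S := Set.Ici (m + (n + 1 : ℕ))) (T := {m + (n : ℤ)})
    (U := Set.Ici (m + n)) (by grind) (by grind) (by grind [ComplexShape.up_Rel])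
  have (n : ℕ) : IsIso ((Q ⋙ F).map (S n).f) :=
    isIso_map_Q_map_f_of_isZero F (shortExact_brutalTruncShortComplex K _ _ _)
      (isZero_obj_Q_obj_brutalTrunc_singleton F (hK _))
  simpa using isZero_obj_zero_of_inverse_tower (Q ⋙ F)
    (X := fun n => brutalTrunc K (Set.Ici (m + n))) (fun n => (S n).f)
    (fun i => ⟨(i + 1 - m).toNat, fun n hn => isZero_brutalTruncX K (by grind)⟩)

lemma isZero_obj_Q_obj_brutalTrunc_Iio [HasColimitsOfShape (Discrete ℕ) C]
    [HasExactColimitsOfShape (Discrete ℕ) C] [PreservesColimitsOfShape (Discrete ℕ) F]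
    (hK : ∀ n, IsZero (F.obj ((singleFunctor C 0).obj (K.X n)))) (m : ℤ) :
    IsZero (F.obj (Q.obj (brutalTrunc K (Set.Iio m)))) := by
  let S (n : ℕ) := brutalTruncShortComplex K (S := {m - (n : ℤ) - 1})
    (T := Set.Iio (m - (n + 1 : ℕ))) (U := Set.Iio (m - n))
    (by grind) (by grind) (by grind [ComplexShape.up_Rel])
  have (n : ℕ) : IsIso ((Q ⋙ F).map (S n).g) :=
    isIso_map_Q_map_g_of_isZero F (shortExact_brutalTruncShortComplex K _ _ _)
      (isZero_obj_Q_obj_brutalTrunc_singleton F (hK _))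
  simpa using isZero_obj_zero_of_direct_tower (Q ⋙ F)
    (X := fun n => brutalTrunc K (Set.Iio (m - n))) (fun n => (S n).g)
    (fun i => ⟨(m - i).toNat, fun n hn => isZero_brutalTruncX K (by grind)⟩)

theorem stmt17_general
    [HasLimitsOfShape (Discrete ℕ) C] [HasExactLimitsOfShape (Discrete ℕ) C]
    [HasColimitsOfShape (Discrete ℕ) C] [HasExactColimitsOfShape (Discrete ℕ) C]
    [PreservesLimitsOfShape (Discrete ℕ) F] [PreservesColimitsOfShape (Discrete ℕ) F]
    (hK : ∀ n, IsZero (F.obj ((singleFunctor C 0).obj (K.X n)))) :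
    IsZero (F.obj (Q.obj K)) := by
  have shortExact := shortExact_brutalTruncShortComplex K (S := Set.Ici 0) (T := Set.Iio 0)
    (U := Set.univ) (by grind) (by grind) (by grind [ComplexShape.up_Rel])
  have isZero_univ : IsZero (F.obj (Q.obj (brutalTrunc K Set.univ))) :=
    isZero_obj_Q_obj_X₂ F shortExact (isZero_obj_Q_obj_brutalTrunc_Ici F hK 0)
      (isZero_obj_Q_obj_brutalTrunc_Iio F hK 0)
  exact isZero_univ.of_iso (F.mapIso (Q.mapIso (brutalTruncUnivIso K).symm))

end TriangulatedFunctor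

/-- Let `E` be a ring and let `? ⊗^L_E T : D(E) ⟶ D` be a triangulated functor to a
triangulated category with products and coproducts, preserving coproducts and products
(e.g. because it is both a left and a right adjoint).  If `C•` is a cochain complex of
`E`-modules with `C^k[0] ⊗^L_E T = 0` for every `k ∈ ℤ`, then `C• ⊗^L_E T = 0`. -/
theorem stmt17 {E : Type u} [Ring E] [HasDerivedCategory.{w} (ModuleCat.{u} E)]
    {D : Type*} [Category.{v} D] [Preadditive D] [HasZeroObject D] [HasShift D ℤ]
    [∀ n : ℤ, (CategoryTheory.shiftFunctor D n).Additive] [Pretriangulated D]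
    [HasProducts.{s} D] [HasCoproducts.{s} D]
    (F : DerivedCategory (ModuleCat.{u} E) ⥤ D) [F.CommShift ℤ] [F.IsTriangulated]
    [∀ J : Type s, PreservesColimitsOfShape (Discrete J) F]
    [∀ J : Type s, PreservesLimitsOfShape (Discrete J) F]
    (Cc : CochainComplex (ModuleCat.{u} E) ℤ)
    (h : ∀ k : ℤ, IsZero (F.obj
      ((DerivedCategory.singleFunctor (ModuleCat.{u} E) 0).obj (Cc.X k)))) :
    IsZero (F.obj (DerivedCategory.Q.obj Cc)) := by
  have : PreservesLimitsOfShape (Discrete ℕ) F :=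
    preservesLimitsOfShape_of_equiv (Discrete.equivalence (Equiv.ulift.{s} (α := ℕ))) F
  have : PreservesColimitsOfShape (Discrete ℕ) F :=
    preservesColimitsOfShape_of_equiv (Discrete.equivalence (Equiv.ulift.{s} (α := ℕ))) F
  have := AB4StarOfSize_shrink.{0, u} (ModuleCat.{u} E)
  have := AB4OfSize_shrink.{0, u} (ModuleCat.{u} E)
  exact stmt17_general F h
end
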